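/- arXiv:1912.03398 — 3 statements merged into one kernel-verified Lean document; each statement's English description precedes it below -/
import Mathlib

section
/- In the group U, with z = (bc^{-1})^4 and w = (c^{-1}b)^4, the following conjugation relations hold: a^{-1}za = z^{-1}, b^{-1}zb = w, c^{-1}zc = w, a^{-1}wa = w, b^{-1}wb = z^{-1}, and c^{-1}wc = z^{-1}. -/
/-- The defining relators of the group `U` on generators `a, b, c` (indexed `0, 1, 2`):
`a^4, b^4, c^4, (ab)^2, (bc)^2, (abc)^2, (a^2b^2)^4, a^2c^2b^2(ac)^2, [a,c⁻¹]b^2`,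
where `[x,y] = x⁻¹y⁻¹xy`. -/
def Urels : Set (FreeGroup (Fin 3)) :=
  {(FreeGroup.of 0) ^ 4, (FreeGroup.of 1) ^ 4, (FreeGroup.of 2) ^ 4,
   (FreeGroup.of 0 * FreeGroup.of 1) ^ 2,
   (FreeGroup.of 1 * FreeGroup.of 2) ^ 2,
   (FreeGroup.of 0 * FreeGroup.of 1 * FreeGroup.of 2) ^ 2,
   ((FreeGroup.of 0) ^ 2 * (FreeGroup.of 1) ^ 2) ^ 4,
   (FreeGroup.of 0) ^ 2 * (FreeGroup.of 2) ^ 2 * (FreeGroup.of 1) ^ 2 *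
     (FreeGroup.of 0 * FreeGroup.of 2) ^ 2,
   (FreeGroup.of 0)⁻¹ * FreeGroup.of 2 * FreeGroup.of 0 * (FreeGroup.of 2)⁻¹ *
     (FreeGroup.of 1) ^ 2}

/-- The finitely presented group `U`. -/
abbrev UGroup : Type := PresentedGroup Urels

/-- The generator `a` of `U`. -/
def Ua : UGroup := PresentedGroup.of 0

/-- The generator `b` of `U`. -/
def Ub : UGroup := PresentedGroup.of 1

/-- The generator `c` of `U`. -/
def Uc : UGroup := PresentedGroup.of 2

/-- The element `z = (bc⁻¹)^4` of `U`. -/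
def Uz : UGroup := (Ub * Uc⁻¹) ^ 4

/-- The element `w = (c⁻¹b)^4` of `U`. -/
def Uw : UGroup := (Uc⁻¹ * Ub) ^ 4

/-!
In the involutions `s = ab`, `t = bc`, `u = abc` we have `a = ut`, `bc⁻¹ = tp` and
`z = (tp)⁴ = (t · tᵖ)²`, where `p = c² = (su)²` is an involution. As `t` inverts `tp`, the element
`a` inverts `z` as soon as `u` centralizes `z`. Put `q = a² = (ut)²`; conjugation by `u` fixes `p`
and sends `t` to `tq`, hence `t · tᵖ` to `t k tᵖ` with `k = q qᵖ`. The relators `a²c²b²(ac)²` and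
`b⁴` give `k = tˢ t (tˢ t)ᵖ` and commutation relations which make `k` an involution centralized by
`s`, `u` and `p`, whose conjugates by `t` and by `tᵖ` coincide. Together with `k² = 1`, this last
property yields `(t k tᵖ)² = (t tᵖ)²`.
-/

section

variable {G : Type*} [Group G]

theorem inv_mul_pow_mul (x y : G) (n : ℕ) : y⁻¹ * x ^ n * y = (y⁻¹ * x * y) ^ n := by
  simpa using (conj_pow (a := y⁻¹) (b := x) (i := n)).symm

theorem mul_eq_inv_mul_inv_of_sq_eq_one {x y : G} (h : (x * y) ^ 2 = 1) :
    y * x = x⁻¹ * y⁻¹ := by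
  calc y * x = x⁻¹ * (x * y * (x * y)) * y⁻¹ := by simp [mul_assoc]
    _ = x⁻¹ * y⁻¹ := by rw [← sq, h, mul_one]

theorem sq_mul_mul_eq_of_conj_eq {x y k : G} (hx : x * x = 1) (hy : y * y = 1)
    (hk : k * k = 1) (h : x * k * x = y * k * y) :
    (x * k * y) ^ 2 = (x * y) ^ 2 := by
  calc (x * k * y) ^ 2 = x * k * y * (x * k * x) * (x⁻¹ * y) := by simp [sq, mul_assoc]
    _ = x * k * y * (y * k * y) * (x * y) := by rw [h, inv_eq_of_mul_eq_one_left hx]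
    _ = x * (k * ((y * y) * k)) * y * (x * y) := by simp only [mul_assoc]
    _ = (x * y) ^ 2 := by rw [hy, one_mul, hk, mul_one, sq]

end

/-- Three involutions satisfying the relations that `s = ab`, `t = bc`, `u = abc` inherit from `U`;
the generators are recovered as `a = ut`, `b = tus` and `c = su`. -/
structure InvolutionTriple (G : Type*) [Group G] where
  s : G
  t : G
  u : G
  s_mul_self : s * s = 1
  t_mul_self : t * t = 1
  u_mul_self : u * u = 1
  ut_pow_four : (u * t) ^ 4 = 1
  su_pow_four : (s * u) ^ 4 = 1
  tus_pow_four : (t * u * s) ^ 4 = 1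
  relator : (u * t) ^ 2 * (s * u) ^ 2 * (t * u * s) ^ 2 * (u * t * (s * u)) ^ 2 = 1

namespace InvolutionTriple

variable {G : Type*} [Group G] (P : InvolutionTriple G)

attribute [simp] s_mul_self t_mul_self u_mul_self

/-- The involution `c²`, which commutes with `s` and `u`. -/
def p : G := (P.s * P.u) ^ 2

/-- The involution `a²`, which commutes with `t` and `u`. -/
def q : G := (P.u * P.t) ^ 2

/-- Conjugation by `s`. The relations below are between the images of `t` and `q` under the
commuting automorphisms `σ` and `π`. -/
def σ : MulAut G := MulAut.conj P.s

/-- Conjugation by `u`, which sends `t` to `tq`, fixes `q`, and satisfies `υσ = πσυ`. -/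
def υ : MulAut G := MulAut.conj P.u

/-- Conjugation by `p = c²`. -/
def π : MulAut G := MulAut.conj P.p

@[simp] theorem inv_s : P.s⁻¹ = P.s := inv_eq_of_mul_eq_one_left P.s_mul_self

@[simp] theorem inv_t : P.t⁻¹ = P.t := inv_eq_of_mul_eq_one_left P.t_mul_self

@[simp] theorem inv_u : P.u⁻¹ = P.u := inv_eq_of_mul_eq_one_left P.u_mul_self

@[simp] theorem p_mul_self : P.p * P.p = 1 := by
  rw [p, ← pow_add, P.su_pow_four]

@[simp] theorem q_mul_self : P.q * P.q = 1 := by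
  rw [q, ← pow_add, P.ut_pow_four]

@[simp] theorem inv_p : P.p⁻¹ = P.p := inv_eq_of_mul_eq_one_left P.p_mul_self

@[simp] theorem inv_q : P.q⁻¹ = P.q := inv_eq_of_mul_eq_one_left P.q_mul_self

@[simp] theorem s_mul_s_mul (x : G) : P.s * (P.s * x) = x := by simp [← mul_assoc]

@[simp] theorem t_mul_t_mul (x : G) : P.t * (P.t * x) = x := by simp [← mul_assoc]

@[simp] theorem u_mul_u_mul (x : G) : P.u * (P.u * x) = x := by simp [← mul_assoc]

@[simp] theorem p_mul_p_mul (x : G) : P.p * (P.p * x) = x := by simp [← mul_assoc]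

theorem σ_apply (x : G) : P.σ x = P.s * x * P.s := by simp [σ]

theorem υ_apply (x : G) : P.υ x = P.u * x * P.u := by simp [υ]

theorem π_apply (x : G) : P.π x = P.p * x * P.p := by simp [π]

@[simp] theorem σ_σ (x : G) : P.σ (P.σ x) = x := by simp [σ_apply, mul_assoc]

@[simp] theorem π_π (x : G) : P.π (P.π x) = x := by simp [π_apply, mul_assoc]

theorem υ_p : P.υ P.p = P.p := by
  calc P.υ P.p = P.p⁻¹ := by simp [υ_apply, p, sq, mul_assoc]
    _ = P.p := P.inv_p

theorem σ_p : P.σ P.p = P.p := by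
  calc P.σ P.p = P.p⁻¹ := by simp [σ_apply, p, sq, mul_assoc]
    _ = P.p := P.inv_p

theorem υ_q : P.υ P.q = P.q := by
  calc P.υ P.q = P.q⁻¹ := by simp [υ_apply, q, sq, mul_assoc]
    _ = P.q := P.inv_q

@[simp] theorem σ_π (x : G) : P.σ (P.π x) = P.π (P.σ x) := by
  simp [π_apply, P.σ_p]

@[simp] theorem υ_π (x : G) : P.υ (P.π x) = P.π (P.υ x) := by
  simp [π_apply, P.υ_p]

theorem u_mul_s : P.u * P.s = P.p * (P.s * P.u) := by
  rw [← inv_p]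
  simp [p, sq, mul_assoc]

theorem υ_σ (x : G) : P.υ (P.σ x) = P.π (P.σ (P.υ x)) := by
  have hsu : P.s * P.u = P.u * P.s * P.p := by simpa using congrArg (·⁻¹) P.u_mul_s
  calc P.υ (P.σ x) = P.u * P.s * x * (P.s * P.u) := by simp only [υ_apply, σ_apply, mul_assoc]
    _ = P.p * (P.s * P.u) * x * (P.u * P.s * P.p) := by rw [← u_mul_s, ← hsu]
    _ = P.π (P.σ (P.υ x)) := by simp only [υ_apply, σ_apply, π_apply, mul_assoc]

theorem υ_t : P.υ P.t = P.t * P.q := by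
  rw [← inv_q]
  simp [υ_apply, q, sq, mul_assoc]

theorem commute_q_t : Commute P.q P.t := by
  calc P.q * P.t = P.υ P.t := by simp [υ_apply, q, sq, mul_assoc]
    _ = P.t * P.q := P.υ_t

theorem tus_sq : (P.t * P.u * P.s) ^ 2 = P.υ (P.t * P.q * P.σ P.t * P.p) := by
  rw [← υ_t]
  simp [υ_apply, σ_apply, p, sq, mul_assoc]

theorem utsu_sq : (P.u * P.t * (P.s * P.u)) ^ 2 = P.υ (P.t * P.σ P.t) := by
  simp [υ_apply, σ_apply, sq, mul_assoc]

theorem q_mul_π_q : P.q * P.π P.q = P.σ P.t * P.t * P.π (P.σ P.t * P.t) := by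
  have h : P.υ (P.q * P.p * (P.t * P.q * P.σ P.t * P.p) * (P.t * P.σ P.t)) = 1 := by
    rw [map_mul, map_mul, map_mul, υ_q, υ_p, ← tus_sq, ← utsu_sq]
    exact P.relator
  rw [map_eq_one_iff _ P.υ.injective, ← P.commute_q_t.eq] at h
  have h' : P.q * P.π P.q * (P.σ P.t * P.t * P.π (P.σ P.t * P.t))⁻¹ = 1 := by
    rw [← h]
    simp [π_apply, σ_apply, mul_assoc]
  exact mul_inv_eq_one.mp h'

theorem π_t_mul_q_mul_σ_t : P.π (P.t * P.q * P.σ P.t) = P.σ P.t * P.t * P.q := by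
  have h : P.υ ((P.t * P.q * P.σ P.t * P.p) ^ 2) = 1 := by
    rw [map_pow, ← tus_sq, ← pow_mul, P.tus_pow_four]
  rw [map_eq_one_iff _ P.υ.injective] at h
  have h' : P.t * P.q * P.σ P.t * P.π (P.t * P.q * P.σ P.t) = 1 := by
    rw [← h]
    simp only [π_apply, sq, mul_assoc]
  rw [← inv_eq_of_mul_eq_one_right h', ← P.commute_q_t.eq]
  simp [← map_inv, mul_assoc]

theorem commute_q_σ_t : Commute P.q (P.σ P.t) := by
  have h : P.q * (P.σ P.t * P.t) * P.q * P.π (P.σ P.t * P.t) = P.q * P.π P.q := by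
    calc P.q * (P.σ P.t * P.t) * P.q * P.π (P.σ P.t * P.t)
        = P.q * P.π (P.t * P.q * P.σ P.t) * P.π (P.σ P.t * P.t) := by
          rw [π_t_mul_q_mul_σ_t]
          simp only [mul_assoc]
      _ = P.q * P.π (P.q * P.t * (P.σ (P.t * P.t) * P.t)) := by
          rw [P.commute_q_t.eq]
          simp only [map_mul, mul_assoc]
      _ = P.q * P.π P.q := by simp [mul_assoc]
  rw [q_mul_π_q, mul_left_inj] at h
  have h' : Commute P.q (P.σ P.t * P.t) := by
    simpa [mul_assoc, Commute, SemiconjBy] using congrArg (· * P.q) h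
  simpa [mul_assoc] using h'.mul_right P.commute_q_t

theorem commute_q_σ_q_mul_π_t : Commute P.q (P.σ P.q * P.π P.t) := by
  have h : Commute P.q (P.t * P.σ P.t * (P.σ P.q * P.π P.t)) := by
    have hυ := P.commute_q_σ_t.map P.υ
    have hσ : P.π (P.σ P.t * P.σ P.q * P.t) = P.t * P.σ P.t * P.σ P.q := by
      simpa using congrArg P.σ P.π_t_mul_q_mul_σ_t
    have hπ : P.π (P.σ (P.t * P.q)) = P.t * P.σ P.t * P.σ P.q * P.π P.t := by
      rw [← hσ, ← map_mul]
      simp [mul_assoc]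
    rw [υ_q, υ_σ, υ_t, hπ] at hυ
    simpa only [mul_assoc] using hυ
  have h' := (P.commute_q_t.mul_right P.commute_q_σ_t).inv_right.mul_right h
  simpa [mul_assoc] using h'

/-- The product of `a²` and its conjugate by `c²`, an involution which measures how far `υ` is from
fixing `t (π t)`. -/
def k : G := P.q * P.π P.q

theorem σ_k : P.σ P.k = P.k := by
  calc P.σ P.k = (P.π P.k)⁻¹ := by
        rw [k, q_mul_π_q]
        simp [← map_inv, mul_assoc]
    _ = P.k := by simp [k, ← map_inv]

theorem υ_k : P.υ P.k = P.k := by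
  simp [k, υ_q]

theorem π_k : P.π P.k = P.k := by
  calc P.π P.k = P.π (P.σ (P.υ P.k)) := by rw [υ_k, σ_k]
    _ = P.υ (P.σ P.k) := (P.υ_σ _).symm
    _ = P.k := by rw [σ_k, υ_k]

theorem commute_q_π_q : Commute P.q (P.π P.q) := by
  have h := P.π_k
  simp only [k, map_mul, π_π] at h
  exact h.symm

theorem k_mul_self : P.k * P.k = 1 := by
  nth_rw 2 [← P.π_k]
  simp [k, mul_assoc, mul_eq_one_iff_eq_inv, ← map_inv]

theorem π_q : P.π P.q = P.q * P.k := by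
  simp [k, ← mul_assoc]

theorem commute_k_q : Commute P.k P.q :=
  (Commute.refl P.q).mul_left P.commute_q_π_q.symm

theorem π_t_mul_k_mul_π_t :
    P.π P.t * P.k * P.π P.t = P.σ P.q * P.q * (P.σ P.q * P.q) * P.k := by
  have hq : P.π P.t * P.q * P.π P.t = P.σ P.q * P.q * P.σ P.q := by
    have h := P.commute_q_σ_q_mul_π_t.eq
    calc P.π P.t * P.q * P.π P.t = P.σ P.q * (P.σ P.q * P.π P.t * P.q) * P.π P.t := by
          simp [← mul_assoc, ← map_mul]
      _ = P.σ P.q * (P.q * P.σ P.q) * P.π (P.t * P.t) := by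
          rw [← h]
          simp only [map_mul, mul_assoc]
      _ = P.σ P.q * P.q * P.σ P.q := by simp [mul_assoc]
  calc P.π P.t * P.k * P.π P.t = P.π P.t * P.q * P.π (P.q * P.t) := by
        simp only [k, map_mul, mul_assoc]
    _ = P.π P.t * P.q * P.π P.t * P.π P.q := by
        rw [P.commute_q_t.eq]
        simp only [map_mul, mul_assoc]
    _ = P.σ P.q * P.q * (P.σ P.q * P.q) * P.k := by
        rw [hq, π_q]
        simp only [mul_assoc]

theorem t_mul_k_mul_t : P.t * P.k * P.t = P.π P.t * P.k * P.π P.t := by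
  have hσ : P.π (P.σ P.q * P.q) = P.σ P.q * P.q := by
    rw [map_mul, ← σ_π, π_q, map_mul, σ_k, ← P.commute_k_q.eq, mul_assoc, ← mul_assoc P.k,
      k_mul_self, one_mul]
  calc P.t * P.k * P.t = P.π (P.π P.t * P.k * P.π P.t) := by simp only [map_mul, π_π, π_k]
    _ = P.π P.t * P.k * P.π P.t := by rw [π_t_mul_k_mul_π_t, map_mul, map_mul, hσ, π_k]

theorem υ_tp_pow_four : P.υ ((P.t * P.p) ^ 4) = (P.t * P.p) ^ 4 := by
  have h : (P.t * P.p) ^ 4 = (P.t * P.π P.t) ^ 2 := by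
    simp only [π_apply, pow_succ, pow_zero, one_mul, mul_assoc]
  have ht : P.π P.t * P.π P.t = 1 := by rw [← map_mul, t_mul_self, map_one]
  calc P.υ ((P.t * P.p) ^ 4) = (P.t * P.q * P.π (P.q * P.t)) ^ 2 := by
        rw [h, map_pow, map_mul, υ_π, υ_t, P.commute_q_t.eq]
    _ = (P.t * P.k * P.π P.t) ^ 2 := by simp only [k, map_mul, mul_assoc]
    _ = (P.t * P.π P.t) ^ 2 :=
        sq_mul_mul_eq_of_conj_eq P.t_mul_self ht P.k_mul_self P.t_mul_k_mul_t
    _ = (P.t * P.p) ^ 4 := h.symm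

theorem ut_conj_tp_pow_four :
    (P.u * P.t)⁻¹ * (P.t * P.p) ^ 4 * (P.u * P.t) = ((P.t * P.p) ^ 4)⁻¹ := by
  calc (P.u * P.t)⁻¹ * (P.t * P.p) ^ 4 * (P.u * P.t) = P.t * P.υ ((P.t * P.p) ^ 4) * P.t⁻¹ := by
        simp [υ_apply, mul_assoc]
    _ = (P.t * (P.t * P.p) * P.t⁻¹) ^ 4 := by rw [υ_tp_pow_four, conj_pow]
    _ = ((P.t * P.p) ^ 4)⁻¹ := by simp [← inv_pow]

end InvolutionTriple

section Generators

variable {G : Type*} [Group G] {a b c : G}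

theorem a_conj_mul_inv_pow_four (ha : a ^ 4 = 1) (hb : b ^ 4 = 1) (hc : c ^ 4 = 1)
    (hab : (a * b) ^ 2 = 1) (hbc : (b * c) ^ 2 = 1) (habc : (a * b * c) ^ 2 = 1)
    (hr : a ^ 2 * c ^ 2 * b ^ 2 * (a * c) ^ 2 = 1) :
    a⁻¹ * (b * c⁻¹) ^ 4 * a = ((b * c⁻¹) ^ 4)⁻¹ := by
  have hut : a * b * c * (b * c) = a := by rw [mul_assoc a, mul_assoc a, ← sq, hbc, mul_one]
  have hsu : a * b * (a * b * c) = c := by rw [← mul_assoc, ← sq, hab, one_mul]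
  have htus : b * c * (a * b * c) * (a * b) = b := by
    have h : a * b * c = (a * b * c)⁻¹ := eq_inv_of_mul_eq_one_left (by rw [← sq, habc])
    calc b * c * (a * b * c) * (a * b) = b * c * (a * b * c)⁻¹ * (a * b) := by rw [← h]
      _ = b := by group
  let P : InvolutionTriple G :=
    { s := a * b
      t := b * c
      u := a * b * c
      s_mul_self := by rw [← sq, hab]
      t_mul_self := by rw [← sq, hbc]
      u_mul_self := by rw [← sq, habc]
      ut_pow_four := by rw [hut, ha]
      su_pow_four := by rw [hsu, hc]
      tus_pow_four := by rw [htus, hb]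
      relator := by rw [hut, hsu, htus, hr] }
  have htp : P.t * P.p = b * c⁻¹ := by
    calc P.t * P.p = b * c * c ^ 2 := by rw [InvolutionTriple.p, hsu]
      _ = b * c ^ 4 * c⁻¹ := by group
      _ = b * c⁻¹ := by rw [hc, mul_one]
  have h := P.ut_conj_tp_pow_four
  rwa [htp, show P.u * P.t = a from hut] at h

theorem b_conj_inv_mul_pow_four (hb : b ^ 4 = 1) (hbc : (b * c) ^ 2 = 1) :
    b⁻¹ * (c⁻¹ * b) ^ 4 * b = ((b * c⁻¹) ^ 4)⁻¹ := by
  have h : b⁻¹ * (c⁻¹ * b) * b = (b * c⁻¹)⁻¹ := by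
    calc b⁻¹ * (c⁻¹ * b) * b = b⁻¹ * c⁻¹ * b ^ 2 := by simp only [sq, mul_assoc]
      _ = c * b ^ 4 * b⁻¹ := by rw [← mul_eq_inv_mul_inv_of_sq_eq_one hbc]; group
      _ = (b * c⁻¹)⁻¹ := by rw [hb]; group
  rw [inv_mul_pow_mul, h, inv_pow]

theorem c_conj_inv_mul_pow_four (hc : c ^ 4 = 1) (hbc : (b * c) ^ 2 = 1) :
    c⁻¹ * (c⁻¹ * b) ^ 4 * c = ((b * c⁻¹) ^ 4)⁻¹ := by
  have h : c⁻¹ * (c⁻¹ * b) * c = (b * c⁻¹)⁻¹ := by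
    calc c⁻¹ * (c⁻¹ * b) * c = (c ^ 4)⁻¹ * c * (c * b) * c := by group
      _ = (b * c⁻¹)⁻¹ := by rw [hc, mul_eq_inv_mul_inv_of_sq_eq_one hbc]; group
  rw [inv_mul_pow_mul, h, inv_pow]

theorem conj_relations_zw_general (ha : a ^ 4 = 1) (hb : b ^ 4 = 1) (hc : c ^ 4 = 1)
    (hab : (a * b) ^ 2 = 1) (hbc : (b * c) ^ 2 = 1) (habc : (a * b * c) ^ 2 = 1)
    (hr : a ^ 2 * c ^ 2 * b ^ 2 * (a * c) ^ 2 = 1) :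
    a⁻¹ * (b * c⁻¹) ^ 4 * a = ((b * c⁻¹) ^ 4)⁻¹ ∧
    b⁻¹ * (b * c⁻¹) ^ 4 * b = (c⁻¹ * b) ^ 4 ∧
    c⁻¹ * (b * c⁻¹) ^ 4 * c = (c⁻¹ * b) ^ 4 ∧
    a⁻¹ * (c⁻¹ * b) ^ 4 * a = (c⁻¹ * b) ^ 4 ∧
    b⁻¹ * (c⁻¹ * b) ^ 4 * b = ((b * c⁻¹) ^ 4)⁻¹ ∧
    c⁻¹ * (c⁻¹ * b) ^ 4 * c = ((b * c⁻¹) ^ 4)⁻¹ := by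
  have hza := a_conj_mul_inv_pow_four ha hb hc hab hbc habc hr
  have hzb : b⁻¹ * (b * c⁻¹) ^ 4 * b = (c⁻¹ * b) ^ 4 := by rw [inv_mul_pow_mul]; group
  have hzc : c⁻¹ * (b * c⁻¹) ^ 4 * c = (c⁻¹ * b) ^ 4 := by rw [inv_mul_pow_mul]; group
  have hwb := b_conj_inv_mul_pow_four hb hbc
  refine ⟨hza, hzb, hzc, ?_, hwb, c_conj_inv_mul_pow_four hc hbc⟩
  generalize (b * c⁻¹) ^ 4 = z, (c⁻¹ * b) ^ 4 = w at *
  have haz : a * z * a⁻¹ = z⁻¹ := by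
    rw [← inv_inj, inv_inv, conj_inv, ← hza]
    group
  calc a⁻¹ * w * a = (b * a)⁻¹ * z * (b * a) := by rw [← hzb]; group
    _ = b * (a * z * a⁻¹) * b⁻¹ := by rw [mul_eq_inv_mul_inv_of_sq_eq_one hab]; group
    _ = w := by rw [haz, ← hwb]; group

end Generators

/-- The conjugation relations for `z` and `w` in `U`. -/
theorem conj_relations_zw :
    Ua⁻¹ * Uz * Ua = Uz⁻¹ ∧ Ub⁻¹ * Uz * Ub = Uw ∧ Uc⁻¹ * Uz * Uc = Uw ∧
    Ua⁻¹ * Uw * Ua = Uw ∧ Ub⁻¹ * Uw * Ub = Uz⁻¹ ∧ Uc⁻¹ * Uw * Uc = Uz⁻¹ := by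
  have h : ∀ r ∈ Urels, PresentedGroup.mk Urels r = 1 := fun _ ↦ PresentedGroup.one_of_mem
  simp only [Urels, Set.mem_insert_iff, Set.mem_singleton_iff, forall_eq_or_imp, forall_eq] at h
  obtain ⟨ha, hb, hc, hab, hbc, habc, -, hr, -⟩ := h
  exact conj_relations_zw_general ha hb hc hab hbc habc hr
end

section
/- For every positive integer m, the subgroup K_m = ⟨z^m, w^m⟩ of U generated by z^m = (bc^{-1})^{4m} and w^m = (c^{-1}b)^{4m} is a normal subgroup of U of index |U : K_m| = 2048 m^2, and the quotient group H_m = U/K_m is solvable. -/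
/-- The subgroup `K_m = ⟨z^m, w^m⟩` of `U`. -/
def UK (m : ℕ) : Subgroup UGroup := Subgroup.closure {Uz ^ m, Uw ^ m}

/-!
Modulo the normal closure `F` of `a²`, the involutions `abc`, `ab`, `a` satisfy exactly the
relations of the Coxeter group with diagram `abc —4— ab —4— a`, the symmetry group of the square
tiling. It is the wreath product of the infinite dihedral group with a group of order two, and `z`,
`w` map to the fourth powers of the two basic translations. The relations of `U` make `F` a quotient
of `D₄ × C₂`, and an action of `U` on the `32` cosets of `⟨b, c⟩` shows that `F` has order `16`.
Since `z` and `w` act trivially there, `K_m` is the intersection of the kernel of this action with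
the kernel of the reduction modulo `4m` of the map to the Coxeter group.
-/

section Involutions

variable {G : Type*} [Group G] {r s x y : G}

theorem mul_eq_inv_mul_inv (hxy : x * y * (x * y) = 1) : x * y = y⁻¹ * x⁻¹ := by
  rw [← mul_inv_rev]
  exact eq_inv_of_mul_eq_one_left hxy

theorem conj_eq_inv_of_mul_self_eq_one (hx : x * x = 1) (hyx : y * x * (y * x) = 1) :
    x * y * x⁻¹ = y⁻¹ := by
  rw [inv_eq_of_mul_eq_one_right hx]
  exact eq_inv_of_mul_eq_one_right (by rw [← hyx, mul_assoc, mul_assoc])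

theorem commute_of_mul_self_eq_one (hx : x * x = 1) (hy : y * y = 1)
    (hxy : x * y * (x * y) = 1) : Commute x y := by
  rw [commute_iff_eq, ← inv_eq_of_mul_eq_one_right hxy, mul_inv_rev, inv_eq_of_mul_eq_one_right hx,
    inv_eq_of_mul_eq_one_right hy]

theorem conj_mul_self_eq_one (hx : x * x = 1) (g : G) :
    g * x * g⁻¹ * (g * x * g⁻¹) = 1 := by
  rw [conj_mul, hx, mul_one, mul_inv_cancel]

theorem conj_conj_of_mul_self_eq_one (hs : s * s = 1) (x : G) :
    s * (s * x * s⁻¹) * s⁻¹ = x := by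
  rw [inv_eq_of_mul_eq_one_right hs, mul_assoc s x, ← mul_assoc, ← mul_assoc, hs, one_mul,
    mul_assoc, hs, mul_one]

theorem commute_conj_comm (hs : s * s = 1) :
    Commute x (s * y * s⁻¹) ↔ Commute (s * x * s⁻¹) y := by
  rw [← Commute.conj_iff s, conj_conj_of_mul_self_eq_one hs]

theorem commute_conj_iff_mul_pow_four (hr : r * r = 1) (hs : s * s = 1) :
    Commute r (s * r * s⁻¹) ↔ (r * s) ^ 4 = 1 := by
  have hrs : (r * s) ^ 4 = r * (s * r * s⁻¹) * (r * (s * r * s⁻¹)) := by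
    rw [inv_eq_of_mul_eq_one_right hs]
    simp only [pow_succ, pow_zero, one_mul, mul_assoc]
  have hc := conj_mul_self_eq_one hr s
  rw [hrs]
  refine ⟨fun h ↦ ?_, commute_of_mul_self_eq_one hr hc⟩
  rw [h.symm.mul_mul_mul_comm, hr, hc, one_mul]

theorem mul_zpow_mul_of_mul_self_eq_one (hx : x * x = 1) (hy : y * y = 1) (k : ℤ) :
    (x * y) ^ k * x = x * (x * y) ^ (-k) := by
  have h : SemiconjBy x (x * y)⁻¹ (x * y) := by
    rw [SemiconjBy, mul_inv_rev, inv_eq_of_mul_eq_one_right hx, inv_eq_of_mul_eq_one_right hy,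
      mul_assoc]
  rw [← inv_zpow']
  exact (h.zpow_right k).eq.symm

end Involutions

section Cyclic

variable {G : Type*} [Group G]

/-- The homomorphism out of the cyclic group of order `n` (out of `ℤ` if `n = 0`), written
multiplicatively, that sends the generator to an element `g` with `g ^ n = 1`. -/
def cyclicLift {n : ℕ} (g : G) (hg : g ^ n = 1) : Multiplicative (ZMod n) →* G :=
  AddMonoidHom.toMultiplicativeLeft
    (ZMod.lift n ⟨zmultiplesHom (Additive G) (Additive.ofMul g), by
      simpa [← ofMul_pow] using hg⟩)

theorem cyclicLift_ofAdd_intCast {n : ℕ} (g : G) (hg : g ^ n = 1) (k : ℤ) :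
    cyclicLift g hg (Multiplicative.ofAdd (k : ZMod n)) = g ^ k := by
  simp [cyclicLift]

theorem cyclicLift_ofAdd_one {n : ℕ} (g : G) (hg : g ^ n = 1) :
    cyclicLift g hg (Multiplicative.ofAdd (1 : ZMod n)) = g := by
  simpa using cyclicLift_ofAdd_intCast g hg 1

end Cyclic

section Dihedral

open DihedralGroup

variable {G : Type*} [Group G] {n : ℕ}

/-- The universal property of the dihedral group: two elements `x`, `y` of order dividing `2` with
`(x * y) ^ n = 1` are the images of the reflections `sr 0` and `sr 1`. -/
def dihedralLift (x y : G) (hx : x * x = 1) (hy : y * y = 1) (hxy : (x * y) ^ n = 1) :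
    DihedralGroup n →* G where
  toFun
    | r i => cyclicLift (x * y) hxy (.ofAdd i)
    | sr i => x * cyclicLift (x * y) hxy (.ofAdd i)
  map_one' := map_one _
  map_mul' := by
    have conj (i : ZMod n) : cyclicLift (x * y) hxy (.ofAdd i) * x =
        x * cyclicLift (x * y) hxy (.ofAdd (-i)) := by
      obtain ⟨k, rfl⟩ := ZMod.intCast_surjective i
      rw [← Int.cast_neg]
      simpa only [cyclicLift_ofAdd_intCast] using mul_zpow_mul_of_mul_self_eq_one hx hy k
    rintro (i | i) (j | j)
    · simp [ofAdd_add]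
    · simp [← mul_assoc, conj, sub_eq_neg_add, ofAdd_add]
    · simp [mul_assoc, ofAdd_add]
    · rw [mul_assoc, ← mul_assoc _ x, conj, mul_assoc x, ← mul_assoc x x, hx, one_mul, ← map_mul,
        ← ofAdd_add, neg_add_eq_sub, sr_mul_sr]

variable {x y : G} {hx : x * x = 1} {hy : y * y = 1} {hxy : (x * y) ^ n = 1}

theorem dihedralLift_sr (i : ZMod n) :
    dihedralLift x y hx hy hxy (sr i) = x * cyclicLift (x * y) hxy (.ofAdd i) := rfl

@[simp]
theorem dihedralLift_sr_zero : dihedralLift x y hx hy hxy (sr 0) = x := by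
  rw [dihedralLift_sr, ofAdd_zero, map_one, mul_one]

@[simp]
theorem dihedralLift_sr_one : dihedralLift x y hx hy hxy (sr 1) = y := by
  rw [dihedralLift_sr, cyclicLift_ofAdd_one, ← mul_assoc, hx, one_mul]

theorem closure_sr_zero_sr_one :
    Subgroup.closure {sr 0, sr 1} = (⊤ : Subgroup (DihedralGroup n)) := by
  set H : Subgroup (DihedralGroup n) := Subgroup.closure {sr 0, sr 1}
  have hs : sr 0 ∈ H := Subgroup.subset_closure (by simp)
  have hs' : sr 1 ∈ H := Subgroup.subset_closure (by simp)
  have hr (i : ZMod n) : r i ∈ H := by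
    obtain ⟨k, rfl⟩ := ZMod.intCast_surjective i
    rw [← r_one_zpow, show r 1 = sr 0 * sr (1 : ZMod n) by simp]
    exact zpow_mem (mul_mem hs hs') k
  refine (Subgroup.eq_top_iff' H).2 ?_
  rintro (i | i)
  · exact hr i
  · simpa using mul_mem hs (hr i)

theorem dihedralHom_ext {f g : DihedralGroup n →* G} (h₀ : f (sr 0) = g (sr 0))
    (h₁ : f (sr 1) = g (sr 1)) : f = g := by
  refine MonoidHom.eq_of_eqOn_dense closure_sr_zero_sr_one ?_
  rintro _ (rfl | rfl)
  exacts [h₀, h₁]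

theorem dihedralLift_mem {H : Subgroup G} (hxH : x ∈ H) (hyH : y ∈ H) (d : DihedralGroup n) :
    dihedralLift x y hx hy hxy d ∈ H := by
  have h : Subgroup.closure {sr 0, sr 1} ≤ H.comap (dihedralLift x y hx hy hxy) := by
    rw [Subgroup.closure_le]
    rintro _ (rfl | rfl) <;> simpa
  exact h (closure_sr_zero_sr_one (n := n) ▸ Subgroup.mem_top d)

theorem commute_dihedralLift {g : G} (hxg : Commute x g) (hyg : Commute y g)
    (d : DihedralGroup n) : Commute (dihedralLift x y hx hy hxy d) g := by
  have mem {u : G} : u ∈ Subgroup.centralizer {g} ↔ Commute u g := by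
    rw [Subgroup.mem_centralizer_singleton_iff, commute_iff_eq]
  exact mem.1 (dihedralLift_mem (mem.2 hxg) (mem.2 hyg) d)

variable {m : ℕ}

/-- The homomorphism between dihedral groups that applies an additive map to all indices. -/
def dihedralMap (φ : ZMod n →+ ZMod m) : DihedralGroup n →* DihedralGroup m where
  toFun
    | r i => r (φ i)
    | sr i => sr (φ i)
  map_one' := congrArg r (map_zero φ)
  map_mul' := by rintro (i | i) (j | j) <;> simp

@[simp]
theorem dihedralMap_r (φ : ZMod n →+ ZMod m) (i : ZMod n) : dihedralMap φ (r i) = r (φ i) := rfl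

@[simp]
theorem dihedralMap_sr (φ : ZMod n →+ ZMod m) (i : ZMod n) : dihedralMap φ (sr i) = sr (φ i) := rfl

theorem dihedralMap_surjective {φ : ZMod n →+ ZMod m} (hφ : Function.Surjective φ) :
    Function.Surjective (dihedralMap φ) := by
  rintro (i | i) <;> obtain ⟨j, rfl⟩ := hφ i
  exacts [⟨r j, rfl⟩, ⟨sr j, rfl⟩]

theorem dihedralMap_eq_one_iff {φ : ZMod n →+ ZMod m} {x : DihedralGroup n} :
    dihedralMap φ x = 1 ↔ ∃ i, φ i = 0 ∧ x = r i := by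
  rcases x with i | i <;> simp [one_def, -r_zero]

instance isSolvable_dihedralGroup (n : ℕ) : Group.IsSolvable (DihedralGroup n) := by
  have : Group.IsSolvable (DihedralGroup 1) := Group.isSolvable_of_comm (by decide)
  refine Group.isSolvable_of_ker_le_range (cyclicLift (r 1) r_one_pow_n)
    (dihedralMap (0 : ZMod n →+ ZMod 1)) fun x hx ↦ ?_
  obtain ⟨i, -, rfl⟩ := dihedralMap_eq_one_iff.1 hx
  obtain ⟨k, rfl⟩ := ZMod.intCast_surjective i
  exact ⟨.ofAdd k, by rw [cyclicLift_ofAdd_intCast, r_one_zpow]⟩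

end Dihedral

section Extensions

variable {G H P : Type*} [Group G] [Group H] [Group P]

theorem index_ker_inf_ker {f : G →* H} (hf : Function.Surjective f) (g : G →* P) :
    (f.ker ⊓ g.ker).index = Nat.card (f.ker.map g) * Nat.card H := by
  rw [← Subgroup.relIndex_mul_index inf_le_left, Subgroup.inf_relIndex_left, Subgroup.relIndex_ker,
    Subgroup.index_ker, MonoidHom.range_eq_top.2 hf, Subgroup.card_top]

instance isSolvable_semidirectProduct [Group.IsSolvable G] [Group.IsSolvable H]
    (φ : G →* MulAut H) : Group.IsSolvable (H ⋊[φ] G) :=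
  Group.isSolvable_of_ker_le_range SemidirectProduct.inl SemidirectProduct.rightHom
    SemidirectProduct.range_inl_eq_ker_rightHom.ge

end Extensions

section SwapWreath

variable {D E G : Type*} [Group D] [Group E] [Group G]

/-- The action of the cyclic group of order two on `D × D` that exchanges the two coordinates. -/
def swapAction (D : Type*) [Group D] : Multiplicative (ZMod 2) →* MulAut (D × D) :=
  cyclicLift (MulEquiv.prodComm : MulAut (D × D)) (by rw [sq]; rfl)

@[simp]
theorem swapAction_ofAdd_one (x : D × D) : swapAction D (.ofAdd 1) x = x.swap := by
  rw [swapAction, cyclicLift_ofAdd_one]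
  rfl

theorem eq_one_or_eq_ofAdd_one (k : Multiplicative (ZMod 2)) : k = 1 ∨ k = .ofAdd 1 := by
  revert k
  decide

/-- The wreath product of `D` with the cyclic group of order two. -/
abbrev SwapWreath (D : Type*) [Group D] : Type _ := (D × D) ⋊[swapAction D] Multiplicative (ZMod 2)

namespace SwapWreath

open SemidirectProduct

/-- The element of the wreath product that exchanges the two factors. -/
def swap : SwapWreath D := inr (.ofAdd 1)

theorem swap_mul_self : (swap * swap : SwapWreath D) = 1 := by
  rw [swap, ← map_mul]
  exact map_one inr

@[simp]
theorem swap_inv : (swap⁻¹ : SwapWreath D) = swap :=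
  inv_eq_of_mul_eq_one_right swap_mul_self

theorem swap_mul_inl (x y : D) : (swap * inl (x, y) : SwapWreath D) = inl (y, x) * swap := by
  ext <;> simp [swap]

theorem inl_one_mem_iff {H : Subgroup (SwapWreath D)} (hs : swap ∈ H) {x : D} :
    inl (1, x) ∈ H ↔ inl (x, 1) ∈ H := by
  rw [← Subgroup.mul_mem_cancel_left H hs, swap_mul_inl, Subgroup.mul_mem_cancel_right H hs]

theorem eq_top_of_swap_mem {H : Subgroup (SwapWreath D)} (hs : swap ∈ H)
    (hl : ∀ x, inl (x, 1) ∈ H) : H = ⊤ := by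
  refine (Subgroup.eq_top_iff' H).2 fun ⟨⟨x, y⟩, k⟩ ↦ ?_
  have hxy : inl (x, y) ∈ H := by
    simpa [← map_mul] using mul_mem (hl x) ((inl_one_mem_iff hs).2 (hl y))
  rw [mk_eq_inl_mul_inr]
  refine mul_mem hxy ?_
  obtain rfl | rfl := eq_one_or_eq_ofAdd_one k
  · exact (map_one (inr (φ := swapAction D))).symm ▸ one_mem H
  · exact hs

theorem card : Nat.card (SwapWreath D) = 2 * Nat.card D ^ 2 := by
  rw [SemidirectProduct.card, Nat.card_prod,
    Nat.card_eq_fintype_card (α := Multiplicative (ZMod 2)), Fintype.card_multiplicative, ZMod.card,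
    mul_comm, sq]

/-- A homomorphism of groups applied to both factors of the wreath products. -/
def map (f : D →* E) : SwapWreath D →* SwapWreath E :=
  SemidirectProduct.map (f.prodMap f) (MonoidHom.id _) fun k ↦ by
    obtain rfl | rfl := eq_one_or_eq_ofAdd_one k <;> ext <;> simp

theorem map_surjective {f : D →* E} (hf : Function.Surjective f) :
    Function.Surjective (map f) := by
  rintro ⟨⟨x, y⟩, k⟩
  obtain ⟨x, rfl⟩ := hf x
  obtain ⟨y, rfl⟩ := hf y
  exact ⟨⟨(x, y), k⟩, rfl⟩

theorem map_eq_one_iff {f : D →* E} {g : SwapWreath D} :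
    map f g = 1 ↔ ∃ x y, f x = 1 ∧ f y = 1 ∧ g = inl (x, y) := by
  constructor
  · intro h
    have hl := congrArg left h
    have hr := congrArg right h
    refine ⟨g.left.1, g.left.2, congrArg Prod.fst hl, congrArg Prod.snd hl, ?_⟩
    ext
    exacts [rfl, rfl, hr]
  · rintro ⟨x, y, hx, hy, rfl⟩
    rw [map, map_inl, MonoidHom.coe_prodMap, Prod.map_apply, hx, hy]
    exact map_one inl

/-- The homomorphism out of the wreath product that is `f` on the first factor and its conjugate by
the involution `s` on the second one. -/
def lift (f : D →* G) (s : G) (hs : s * s = 1) (comm : ∀ x y, Commute (f x) (s * f y * s⁻¹)) :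
    SwapWreath D →* G :=
  SemidirectProduct.lift (f.noncommCoprod ((MulAut.conj s).toMonoidHom.comp f) comm)
    (cyclicLift s ((sq s).trans hs)) fun k ↦ by
      obtain rfl | rfl := eq_one_or_eq_ofAdd_one k
      · ext; simp
      · ext x
        suffices f x.2 * (s * f x.1 * s⁻¹) = s * (f x.1 * (s * f x.2 * s⁻¹)) * s⁻¹ by
          simpa [cyclicLift_ofAdd_one]
        rw [(comm x.2 x.1).eq, inv_eq_of_mul_eq_one_right hs]
        simp only [mul_assoc, hs, mul_one]

theorem lift_inl {f : D →* G} {s : G} {hs : s * s = 1}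
    {comm : ∀ x y, Commute (f x) (s * f y * s⁻¹)} (x y : D) :
    lift f s hs comm (inl (x, y)) = f x * (s * f y * s⁻¹) := by
  simp [lift]

theorem lift_swap {f : D →* G} {s : G} {hs : s * s = 1}
    {comm : ∀ x y, Commute (f x) (s * f y * s⁻¹)} : lift f s hs comm swap = s := by
  simp [lift, swap, cyclicLift_ofAdd_one]

end SwapWreath

end SwapWreath

section Coxeter

open DihedralGroup SemidirectProduct

variable {G : Type*} [Group G] {r s a : G}

/-- The wreath product of the dihedral group of order `2 * n` with the cyclic group of order two is
the Coxeter group with diagram `r —4— s —4— a` subject to one more relation, which is void for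
`n = 0`. This is its universal property. -/
def coxeterLift {n : ℕ} (hr : r * r = 1) (hs : s * s = 1) (ha : a * a = 1) (hra : Commute r a)
    (hrs : (r * s) ^ 4 = 1) (has : (a * s) ^ 4 = 1) (hn : (r * (s * a * s⁻¹)) ^ n = 1) :
    SwapWreath (DihedralGroup n) →* G :=
  SwapWreath.lift (dihedralLift r (s * a * s⁻¹) hr (conj_mul_self_eq_one ha s) hn) s hs
      fun d d' ↦ by
    have har : Commute (s * a * s⁻¹) (s * r * s⁻¹) := (Commute.conj_iff s).2 hra.symm
    have hrr := (commute_conj_iff_mul_pow_four hr hs).2 hrs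
    have haa := ((commute_conj_iff_mul_pow_four ha hs).2 has).symm
    refine commute_dihedralLift ?_ ((Commute.conj_iff s).2 ?_) d
    · exact (commute_conj_comm hs).2 (commute_dihedralLift hrr har d').symm
    · exact (commute_dihedralLift hra haa d').symm

section

variable {n : ℕ} {hr : r * r = 1} {hs : s * s = 1} {ha : a * a = 1} {hra : Commute r a}
    {hrs : (r * s) ^ 4 = 1} {has : (a * s) ^ 4 = 1} {hn : (r * (s * a * s⁻¹)) ^ n = 1}

theorem coxeterLift_inl_sr_zero_one : coxeterLift hr hs ha hra hrs has hn (inl (sr 0, 1)) = r := by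
  simp [coxeterLift, SwapWreath.lift_inl]

theorem coxeterLift_inl_one_sr_one : coxeterLift hr hs ha hra hrs has hn (inl (1, sr 1)) = a := by
  rw [coxeterLift, SwapWreath.lift_inl, map_one, one_mul, dihedralLift_sr_one,
    conj_conj_of_mul_self_eq_one hs]

theorem coxeterLift_swap : coxeterLift hr hs ha hra hrs has hn SwapWreath.swap = s :=
  SwapWreath.lift_swap

end

end Coxeter

section Relations

open DihedralGroup

variable {G H : Type*} [Group G] [Group H] {a b c : G}

/-- The elements `a`, `b`, `c` of a group satisfy the defining relations of `U`. -/
structure IsUTriple (a b c : G) : Prop where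
  a_pow_four : a ^ 4 = 1
  b_pow_four : b ^ 4 = 1
  c_pow_four : c ^ 4 = 1
  ab_sq : (a * b) ^ 2 = 1
  bc_sq : (b * c) ^ 2 = 1
  abc_sq : (a * b * c) ^ 2 = 1
  a_sq_b_sq_pow_four : (a ^ 2 * b ^ 2) ^ 4 = 1
  a_sq_c_sq_b_sq_ac_sq : a ^ 2 * c ^ 2 * b ^ 2 * (a * c) ^ 2 = 1
  commutator_b_sq : a⁻¹ * c * a * c⁻¹ * b ^ 2 = 1

theorem isUTriple_iff :
    IsUTriple a b c ↔ ∀ x ∈ Urels, FreeGroup.lift ![a, b, c] x = 1 := by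
  simp only [Urels, Set.forall_mem_insert, Set.mem_singleton_iff, forall_eq, map_mul, map_pow,
    map_inv, FreeGroup.lift_apply_of, Matrix.cons_val]
  constructor
  · rintro ⟨h₁, h₂, h₃, h₄, h₅, h₆, h₇, h₈, h₉⟩
    exact ⟨h₁, h₂, h₃, h₄, h₅, h₆, h₇, h₈, h₉⟩
  · rintro ⟨h₁, h₂, h₃, h₄, h₅, h₆, h₇, h₈, h₉⟩
    exact ⟨h₁, h₂, h₃, h₄, h₅, h₆, h₇, h₈, h₉⟩

theorem isUTriple_generators : IsUTriple Ua Ub Uc := by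
  have h : FreeGroup.lift ![Ua, Ub, Uc] = PresentedGroup.mk Urels := by
    ext i
    fin_cases i <;> simp [Ua, Ub, Uc, PresentedGroup.of]
  rw [isUTriple_iff, h]
  exact fun _ hx ↦ PresentedGroup.one_of_mem hx

theorem uHom_ext {f g : UGroup →* G} (ha : f Ua = g Ua) (hb : f Ub = g Ub) (hc : f Uc = g Uc) :
    f = g := by
  ext i
  fin_cases i
  exacts [ha, hb, hc]

namespace IsUTriple

/-- The homomorphism from `U` determined by a triple that satisfies the defining relations. -/
def hom (h : IsUTriple a b c) : UGroup →* G := PresentedGroup.toGroup (isUTriple_iff.1 h)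

@[simp]
theorem hom_Ua (h : IsUTriple a b c) : h.hom Ua = a := PresentedGroup.toGroup.of _

@[simp]
theorem hom_Ub (h : IsUTriple a b c) : h.hom Ub = b := PresentedGroup.toGroup.of _

@[simp]
theorem hom_Uc (h : IsUTriple a b c) : h.hom Uc = c := PresentedGroup.toGroup.of _

theorem map (h : IsUTriple a b c) (f : G →* H) : IsUTriple (f a) (f b) (f c) := by
  have hf : FreeGroup.lift ![f a, f b, f c] = f.comp (FreeGroup.lift ![a, b, c]) := by
    ext i
    fin_cases i <;> simp
  rw [isUTriple_iff, hf]
  intro x hx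
  rw [MonoidHom.comp_apply, isUTriple_iff.1 h x hx, map_one]

theorem a_sq_mul_self (h : IsUTriple a b c) : a ^ 2 * a ^ 2 = 1 := by
  rw [← pow_add, h.a_pow_four]

theorem a_sq_inv (h : IsUTriple a b c) : (a ^ 2)⁻¹ = a ^ 2 :=
  inv_eq_of_mul_eq_one_right h.a_sq_mul_self

theorem b_sq_mul_self (h : IsUTriple a b c) : b ^ 2 * b ^ 2 = 1 := by
  rw [← pow_add, h.b_pow_four]

theorem bc_mul_self (h : IsUTriple a b c) : b * c * (b * c) = 1 := by
  rw [← sq, h.bc_sq]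

theorem bc_inv (h : IsUTriple a b c) : (b * c)⁻¹ = b * c :=
  inv_eq_of_mul_eq_one_right h.bc_mul_self

theorem ab_mul_self (h : IsUTriple a b c) : a * b * (a * b) = 1 := by
  rw [← sq, h.ab_sq]

theorem abc_mul_self (h : IsUTriple a b c) : a * (b * c) * (a * (b * c)) = 1 := by
  rw [← sq, ← mul_assoc, h.abc_sq]

theorem commute_bc_a_sq (h : IsUTriple a b c) : Commute (b * c) (a ^ 2) := by
  refine mul_inv_eq_iff_eq_mul.1 ?_
  rw [← conj_pow, conj_eq_inv_of_mul_self_eq_one h.bc_mul_self h.abc_mul_self, inv_pow, h.a_sq_inv]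

theorem conj_a_b (h : IsUTriple a b c) : a * b * a⁻¹ = b⁻¹ * a ^ 2 := by
  rw [mul_eq_inv_mul_inv h.ab_mul_self, mul_assoc, ← mul_inv_rev, ← sq, h.a_sq_inv]

theorem c_sq_mul_b_sq (h : IsUTriple a b c) : c ^ 2 * b ^ 2 = b * c * (b * (b * c) * b⁻¹) := by
  have hc : c⁻¹ ^ 2 = c ^ 2 := by
    rw [inv_pow, inv_eq_iff_mul_eq_one, ← pow_add, h.c_pow_four]
  have hb : b⁻¹ ^ 2 = b ^ 2 := by rw [inv_pow, inv_eq_of_mul_eq_one_right h.b_sq_mul_self]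
  have hbcb : b * c * b = c⁻¹ := eq_inv_of_mul_eq_one_left (by rw [mul_assoc, h.bc_mul_self])
  calc c ^ 2 * b ^ 2 = c⁻¹ ^ 2 * b⁻¹ ^ 2 := by rw [hb, hc]
    _ = (b * c * b) ^ 2 * b⁻¹ ^ 2 := by rw [hbcb]
    _ = b * c * (b * (b * c) * b⁻¹) := by simp [sq, mul_assoc]

theorem ac_sq (h : IsUTriple a b c) : (a * c) ^ 2 = a ^ 2 * (b * c * (b * (b * c) * b⁻¹))⁻¹ := by
  have hbca : b * c * a = a⁻¹ * (b * c) := by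
    rw [← conj_eq_inv_of_mul_self_eq_one h.bc_mul_self h.abc_mul_self, inv_mul_cancel_right]
  calc (a * c) ^ 2 = a * b⁻¹ * (b * c * a) * b⁻¹ * (b * c) := by simp [sq, mul_assoc]
    _ = a * b⁻¹ * (a⁻¹ * (b * c)) * b⁻¹ * (b * c) := by rw [hbca]
    _ = (a * b * a⁻¹)⁻¹ * (b * c * b⁻¹ * (b * c)) := by simp [mul_assoc]
    _ = a ^ 2 * (b * ((b * c)⁻¹ * b⁻¹ * (b * c)⁻¹)) := by
      rw [h.conj_a_b, mul_inv_rev, h.a_sq_inv, h.bc_inv, inv_inv, mul_assoc]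
    _ = a ^ 2 * (b * c * (b * (b * c) * b⁻¹))⁻¹ := by simp [mul_assoc]

theorem commute_a_sq_conj_b_bc (h : IsUTriple a b c) : Commute (a ^ 2) (b * (b * c) * b⁻¹) := by
  have hr := h.a_sq_c_sq_b_sq_ac_sq
  rw [mul_assoc (a ^ 2), h.c_sq_mul_b_sq, h.ac_sq, ← mul_assoc, mul_inv_eq_one,
    ← eq_mul_inv_iff_mul_eq, h.a_sq_inv] at hr
  have hy := (h.commute_bc_a_sq.symm.inv_right).mul_right (commute_iff_eq _ _ |>.2 hr)
  rwa [inv_mul_cancel_left] at hy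

theorem commute_bc_conj_b_inv (h : IsUTriple a b c) : Commute (b * c) (b⁻¹ * a ^ 2 * b) := by
  have hb := (Commute.conj_iff b⁻¹).2 h.commute_a_sq_conj_b_bc
  simpa only [inv_inv, mul_assoc, inv_mul_cancel_left, inv_mul_cancel, mul_one] using hb.symm

theorem conj_a_conj_b (h : IsUTriple a b c) : a * (b * a ^ 2 * b⁻¹) * a⁻¹ = b⁻¹ * a ^ 2 * b := by
  calc a * (b * a ^ 2 * b⁻¹) * a⁻¹ = a * b * a ^ 2 * (a * b)⁻¹ := by group
    _ = b⁻¹ * a⁻¹ * a ^ 2 * (b⁻¹ * a⁻¹)⁻¹ := by rw [mul_eq_inv_mul_inv h.ab_mul_self]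
    _ = b⁻¹ * a ^ 2 * b := by group

theorem conj_a_conj_b_inv (h : IsUTriple a b c) :
    a * (b⁻¹ * a ^ 2 * b) * a⁻¹ = a ^ 2 * (b * a ^ 2 * b⁻¹) * a ^ 2 := by
  calc a * (b⁻¹ * a ^ 2 * b) * a⁻¹ = a ^ 2 * (b * a ^ 2 * b⁻¹) * (a ^ 2)⁻¹ := by
        rw [← h.conj_a_conj_b]
        simp only [sq, mul_inv_rev, mul_assoc]
    _ = a ^ 2 * (b * a ^ 2 * b⁻¹) * a ^ 2 := by rw [h.a_sq_inv]

theorem conj_bc_conj_b (h : IsUTriple a b c) :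
    b * c * (b * a ^ 2 * b⁻¹) * (b * c)⁻¹ = a ^ 2 * (b * a ^ 2 * b⁻¹) * a ^ 2 := by
  rw [← h.conj_a_conj_b_inv, ← h.bc_inv]
  calc (b * c)⁻¹ * (b * a ^ 2 * b⁻¹) * (b * c)⁻¹⁻¹
      = (b * c)⁻¹ * a⁻¹ * (a * (b * a ^ 2 * b⁻¹) * a⁻¹) * ((b * c)⁻¹ * a⁻¹)⁻¹ := by group
    _ = a * (b * c) * (b⁻¹ * a ^ 2 * b) * (a * (b * c))⁻¹ := by
      rw [h.conj_a_conj_b, mul_eq_inv_mul_inv h.abc_mul_self]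
    _ = a * (b * c * (b⁻¹ * a ^ 2 * b) * (b * c)⁻¹) * a⁻¹ := by group
    _ = a * (b⁻¹ * a ^ 2 * b) * a⁻¹ := by rw [h.commute_bc_conj_b_inv.mul_inv_cancel]

theorem conj_b_sq_a_sq (h : IsUTriple a b c) : b ^ 2 * a ^ 2 * (b ^ 2)⁻¹ =
    b⁻¹ * a ^ 2 * b * a ^ 2 * (b * a ^ 2 * b⁻¹) := by
  have hab : (b⁻¹ * a ^ 2) ^ 4 = 1 := by
    rw [← h.conj_a_b, conj_pow, h.b_pow_four, mul_one, mul_inv_cancel]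
  have he : b ^ 2 * a ^ 2 * (b ^ 2)⁻¹ * (b * a ^ 2 * b⁻¹ * a ^ 2 * (b⁻¹ * a ^ 2 * b)) = 1 := by
    calc _ = b ^ 3 * (b⁻¹ * a ^ 2) ^ 4 * b := by simp [pow_succ, mul_assoc]
      _ = 1 := by rw [hab, mul_one, ← pow_succ, h.b_pow_four]
  rw [eq_inv_of_mul_eq_one_left he]
  simp only [mul_inv_rev, inv_inv, h.a_sq_inv, mul_assoc]

theorem commute_a_sq_conj_b_sq (h : IsUTriple a b c) :
    Commute (a ^ 2) (b ^ 2 * a ^ 2 * (b ^ 2)⁻¹) :=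
  (commute_conj_iff_mul_pow_four h.a_sq_mul_self h.b_sq_mul_self).2 h.a_sq_b_sq_pow_four

theorem commute_conj_b_conj_b_inv (h : IsUTriple a b c) :
    Commute (b * a ^ 2 * b⁻¹) (b⁻¹ * a ^ 2 * b) := by
  have hb : b * (b ^ 2 * a ^ 2 * (b ^ 2)⁻¹) * b⁻¹ = b⁻¹ * a ^ 2 * b := by
    calc _ = b⁻¹ * b ^ 4 * a ^ 2 * (b ^ 4)⁻¹ * b := by group
      _ = b⁻¹ * a ^ 2 * b := by rw [h.b_pow_four, inv_one, mul_one, mul_one]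
  rw [← hb, Commute.conj_iff]
  exact h.commute_a_sq_conj_b_sq

theorem conj_b_inv_mul_self (h : IsUTriple a b c) : b⁻¹ * a ^ 2 * b * (b⁻¹ * a ^ 2 * b) = 1 := by
  simpa only [inv_inv] using conj_mul_self_eq_one h.a_sq_mul_self b⁻¹

theorem conj_b_inv_mul_conj_b_sq (h : IsUTriple a b c) :
    (b⁻¹ * a ^ 2 * b * (b * a ^ 2 * b⁻¹)) ^ 2 = 1 := by
  rw [h.commute_conj_b_conj_b_inv.symm.mul_pow, sq (_ * b), sq (_ * b⁻¹), h.conj_b_inv_mul_self,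
    conj_mul_self_eq_one h.a_sq_mul_self, one_mul]

theorem commute_a_sq_conj_b_inv_mul_conj_b (h : IsUTriple a b c) :
    Commute (a ^ 2) (b⁻¹ * a ^ 2 * b * (b * a ^ 2 * b⁻¹)) := by
  refine commute_of_mul_self_eq_one h.a_sq_mul_self
    ((sq _).symm.trans h.conj_b_inv_mul_conj_b_sq) ?_
  have he := conj_mul_self_eq_one h.a_sq_mul_self (b ^ 2)
  rw [h.conj_b_sq_a_sq] at he
  have hc := h.commute_conj_b_conj_b_inv.eq
  generalize b⁻¹ * a ^ 2 * b = q at he hc ⊢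
  generalize b * a ^ 2 * b⁻¹ = q' at he hc ⊢
  calc a ^ 2 * (q * q') * (a ^ 2 * (q * q')) = q⁻¹ * (q * a ^ 2 * q' * (q * a ^ 2 * q')) * q := by
        simp [← hc, mul_assoc]
    _ = 1 := by rw [he, mul_one, inv_mul_cancel]

theorem a_sq_mul_conj_b_inv_pow_four (h : IsUTriple a b c) :
    (a ^ 2 * (b⁻¹ * a ^ 2 * b)) ^ 4 = 1 := by
  have he := h.commute_a_sq_conj_b_sq
  rw [h.conj_b_sq_a_sq] at he
  rw [← commute_conj_iff_mul_pow_four h.a_sq_mul_self h.conj_b_inv_mul_self]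
  simpa [mul_assoc] using he.mul_right h.commute_a_sq_conj_b_inv_mul_conj_b.inv_right

/-- The subgroup generated by `a²`, `b⁻¹a²b` and `ba²b⁻¹`, as a homomorphic image of `D₄ × C₂`. If
`a`, `b`, `c` generate the group, then it is the normal closure of `a²`. -/
def smallHom (h : IsUTriple a b c) : DihedralGroup 4 × Multiplicative (ZMod 2) →* G :=
  (dihedralLift (a ^ 2) (b⁻¹ * a ^ 2 * b) h.a_sq_mul_self h.conj_b_inv_mul_self
    h.a_sq_mul_conj_b_inv_pow_four).noncommCoprod
    (cyclicLift (b⁻¹ * a ^ 2 * b * (b * a ^ 2 * b⁻¹)) h.conj_b_inv_mul_conj_b_sq) fun d k ↦ by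
      obtain rfl | rfl := eq_one_or_eq_ofAdd_one k
      · simp
      · rw [cyclicLift_ofAdd_one]
        exact commute_dihedralLift h.commute_a_sq_conj_b_inv_mul_conj_b
          ((Commute.refl _).mul_right h.commute_conj_b_conj_b_inv.symm) d

theorem smallHom_sr_zero (h : IsUTriple a b c) : h.smallHom (sr 0, 1) = a ^ 2 := by
  simp [smallHom]

theorem smallHom_sr_one (h : IsUTriple a b c) : h.smallHom (sr 1, 1) = b⁻¹ * a ^ 2 * b := by
  simp [smallHom]

theorem smallHom_one_ofAdd_one (h : IsUTriple a b c) :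
    h.smallHom (1, .ofAdd 1) = b⁻¹ * a ^ 2 * b * (b * a ^ 2 * b⁻¹) := by
  simp [smallHom, cyclicLift_ofAdd_one]

theorem eq_smallHom (h : IsUTriple a b c) {f : DihedralGroup 4 × Multiplicative (ZMod 2) →* G}
    (hp : f (sr 0, 1) = a ^ 2) (hq : f (sr 1, 1) = b⁻¹ * a ^ 2 * b)
    (hn : f (1, .ofAdd 1) = b⁻¹ * a ^ 2 * b * (b * a ^ 2 * b⁻¹)) : f = h.smallHom := by
  have hd : f.comp (MonoidHom.inl _ _) = h.smallHom.comp (MonoidHom.inl _ _) :=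
    dihedralHom_ext (hp.trans h.smallHom_sr_zero.symm) (hq.trans h.smallHom_sr_one.symm)
  have hk (k : Multiplicative (ZMod 2)) : f (1, k) = h.smallHom (1, k) := by
    obtain rfl | rfl := eq_one_or_eq_ofAdd_one k
    · exact (map_one f).trans (map_one h.smallHom).symm
    · rw [hn, h.smallHom_one_ofAdd_one]
  ext ⟨d, k⟩
  rw [← Prod.fst_mul_snd (d, k), map_mul, map_mul, hk]
  exact congrArg (· * _) (DFunLike.congr_fun hd d)

theorem a_sq_mem_range (h : IsUTriple a b c) : a ^ 2 ∈ h.smallHom.range := ⟨_, h.smallHom_sr_zero⟩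

theorem conj_b_inv_mem_range (h : IsUTriple a b c) : b⁻¹ * a ^ 2 * b ∈ h.smallHom.range :=
  ⟨_, h.smallHom_sr_one⟩

theorem conj_b_mem_range (h : IsUTriple a b c) : b * a ^ 2 * b⁻¹ ∈ h.smallHom.range :=
  (mul_mem_cancel_left h.conj_b_inv_mem_range).1 ⟨_, h.smallHom_one_ofAdd_one⟩

theorem range_smallHom_le (h : IsUTriple a b c) {K : Subgroup G}
    (hp : a ^ 2 ∈ K) (hq : b⁻¹ * a ^ 2 * b ∈ K) (hq' : b * a ^ 2 * b⁻¹ ∈ K) :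
    h.smallHom.range ≤ K := by
  rintro _ ⟨⟨d, k⟩, rfl⟩
  rw [smallHom, MonoidHom.noncommCoprod_apply]
  refine mul_mem (dihedralLift_mem hp hq d) ?_
  obtain rfl | rfl := eq_one_or_eq_ofAdd_one k
  · simp
  · rw [cyclicLift_ofAdd_one]
    exact mul_mem hq hq'

theorem mem_normalizer_range_smallHom (h : IsUTriple a b c) {g : G}
    (hp : g * a ^ 2 * g⁻¹ ∈ h.smallHom.range)
    (hq : g * (b⁻¹ * a ^ 2 * b) * g⁻¹ ∈ h.smallHom.range)
    (hq' : g * (b * a ^ 2 * b⁻¹) * g⁻¹ ∈ h.smallHom.range) :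
    g ∈ Subgroup.normalizer (h.smallHom.range : Set G) :=
  have : Finite h.smallHom.range := Finite.of_surjective _ h.smallHom.rangeRestrict_surjective
  Subgroup.mem_normalizer_fintype <| h.range_smallHom_le
    (K := h.smallHom.range.comap (MulAut.conj g).toMonoidHom) hp hq hq'

theorem normal_range_smallHom (h : IsUTriple a b c) (hgen : Subgroup.closure {a, b, c} = ⊤) :
    h.smallHom.range.Normal := by
  have hp := h.a_sq_mem_range
  have hq := h.conj_b_inv_mem_range
  have hq' := h.conj_b_mem_range
  have ha : a ∈ Subgroup.normalizer (h.smallHom.range : Set G) := by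
    refine h.mem_normalizer_range_smallHom ?_ ?_ ?_
    · rwa [sq, mul_assoc, mul_inv_cancel_right, ← sq]
    · rw [h.conj_a_conj_b_inv]
      exact mul_mem (mul_mem hp hq') hp
    · rwa [h.conj_a_conj_b]
  have hb : b ∈ Subgroup.normalizer (h.smallHom.range : Set G) := by
    refine h.mem_normalizer_range_smallHom hq' ?_ ?_
    · simpa [mul_assoc] using hp
    · have he : b * (b * a ^ 2 * b⁻¹) * b⁻¹ = b ^ 2 * a ^ 2 * (b ^ 2)⁻¹ := by
        simp only [sq, mul_inv_rev, mul_assoc]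
      rw [he, h.conj_b_sq_a_sq]
      exact mul_mem (mul_mem hq hp) hq'
  have hbc : b * c ∈ Subgroup.normalizer (h.smallHom.range : Set G) := by
    refine h.mem_normalizer_range_smallHom ?_ ?_ ?_
    · rwa [h.commute_bc_a_sq.mul_inv_cancel]
    · rwa [h.commute_bc_conj_b_inv.mul_inv_cancel]
    · rw [h.conj_bc_conj_b]
      exact mul_mem (mul_mem hp hq') hp
  rw [← Subgroup.normalizer_eq_top_iff, eq_top_iff, ← hgen, Subgroup.closure_le]
  rintro _ (rfl | rfl | rfl)
  exacts [ha, hb, (mul_mem_cancel_left hb).1 hbc]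

end IsUTriple

end Relations

section Plane

open DihedralGroup SemidirectProduct

variable {G : Type*} [Group G] {a b c : G} {n : ℕ}

theorem isUTriple_swapWreath :
    IsUTriple (inl (1, sr 1)) (inl (1, sr 1) * SwapWreath.swap)
      (SwapWreath.swap * inl (sr 0, 1) : SwapWreath (DihedralGroup n)) := by
  constructor <;> ext <;> simp [SwapWreath.swap, pow_succ, CharTwo.add_self_eq_zero]

namespace IsUTriple

theorem ab_mul_abc (h : IsUTriple a b c) : a * b * (a * (b * c)) = c := by
  have haba : a * b * a = b⁻¹ := eq_inv_of_mul_eq_one_left (by rw [mul_assoc, h.ab_mul_self])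
  rw [← mul_assoc, haba, inv_mul_cancel_left]

theorem abc_mul_ab_pow_four (h : IsUTriple a b c) : (a * (b * c) * (a * b)) ^ 4 = 1 := by
  have hc : a * (b * c) * (a * b) = c⁻¹ := by
    rw [← inv_eq_of_mul_eq_one_right h.abc_mul_self, ← inv_eq_of_mul_eq_one_right h.ab_mul_self,
      ← mul_inv_rev, h.ab_mul_abc]
  rw [hc, inv_pow, h.c_pow_four, inv_one]

theorem commute_abc_a (h : IsUTriple a b c) (ha : a ^ 2 = 1) : Commute (a * (b * c)) a := by
  refine (Commute.refl a).mul_left (mul_inv_eq_iff_eq_mul.1 ?_)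
  rw [conj_eq_inv_of_mul_self_eq_one h.bc_mul_self h.abc_mul_self,
    inv_eq_of_mul_eq_one_right ((sq a).symm.trans ha)]

/-- The homomorphism from the Coxeter group with diagram `abc —4— ab —4— a` that exists if
`a ^ 2 = 1`, because the involutions `abc`, `ab`, `a` then satisfy its relations. -/
def planeLift (h : IsUTriple a b c) (ha : a ^ 2 = 1) : SwapWreath (DihedralGroup 0) →* G :=
  coxeterLift (r := a * (b * c)) (s := a * b) (a := a) h.abc_mul_self h.ab_mul_self
    ((sq a).symm.trans ha) (h.commute_abc_a ha) h.abc_mul_ab_pow_four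
    (by rw [← mul_assoc, ← sq, ha, one_mul, h.b_pow_four]) (pow_zero _)

theorem planeLift_a (h : IsUTriple a b c) (ha : a ^ 2 = 1) :
    h.planeLift ha (inl (1, sr 1)) = a :=
  coxeterLift_inl_one_sr_one

theorem planeLift_b (h : IsUTriple a b c) (ha : a ^ 2 = 1) :
    h.planeLift ha (inl (1, sr 1) * SwapWreath.swap) = b := by
  rw [map_mul, planeLift_a, planeLift, coxeterLift_swap, ← mul_assoc, ← sq, ha, one_mul]

theorem planeLift_c (h : IsUTriple a b c) (ha : a ^ 2 = 1) :
    h.planeLift ha (SwapWreath.swap * inl (sr 0, 1)) = c := by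
  rw [map_mul, planeLift, coxeterLift_swap, coxeterLift_inl_sr_zero_one, h.ab_mul_abc]

end IsUTriple

theorem closure_generators : Subgroup.closure {Ua, Ub, Uc} = ⊤ := by
  have h : Set.range (PresentedGroup.of (rels := Urels)) = {Ua, Ub, Uc} := by
    ext x
    simp [Fin.exists_fin_succ, Ua, Ub, Uc, eq_comm]
  rw [← h, PresentedGroup.closure_range_of]

instance : isUTriple_generators.smallHom.range.Normal :=
  isUTriple_generators.normal_range_smallHom closure_generators

/-- The homomorphism from `U` onto the Coxeter group with diagram `abc —4— ab —4— a`. -/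
def planeHom : UGroup →* SwapWreath (DihedralGroup 0) := isUTriple_swapWreath.hom

theorem planeHom_Ua : planeHom Ua = inl (1, sr 1) := isUTriple_swapWreath.hom_Ua

theorem planeHom_Ub : planeHom Ub = inl (1, sr 1) * SwapWreath.swap := isUTriple_swapWreath.hom_Ub

theorem planeHom_Uc : planeHom Uc = SwapWreath.swap * inl (sr 0, 1) := isUTriple_swapWreath.hom_Uc

theorem swap_mem_range_planeHom : SwapWreath.swap ∈ planeHom.range := by
  have ha : inl (1, sr 1) ∈ planeHom.range := ⟨Ua, planeHom_Ua⟩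
  exact (Subgroup.mul_mem_cancel_left _ ha).1 ⟨Ub, planeHom_Ub⟩

theorem planeHom_surjective : Function.Surjective planeHom := by
  have hs := swap_mem_range_planeHom
  have hr : inl (sr 0, 1) ∈ planeHom.range :=
    (Subgroup.mul_mem_cancel_left _ hs).1 ⟨Uc, planeHom_Uc⟩
  have ha : inl (sr 1, 1) ∈ planeHom.range :=
    (SwapWreath.inl_one_mem_iff hs).1 ⟨Ua, planeHom_Ua⟩
  have h : Subgroup.closure {sr 0, sr 1} ≤
      planeHom.range.comap (inl.comp (MonoidHom.inl (DihedralGroup 0) (DihedralGroup 0))) := by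
    rw [Subgroup.closure_le]
    rintro _ (rfl | rfl)
    exacts [hr, ha]
  exact MonoidHom.range_eq_top.1 <|
    SwapWreath.eq_top_of_swap_mem hs fun x ↦ h (closure_sr_zero_sr_one ▸ Subgroup.mem_top x)

theorem planeHom_Uz : planeHom Uz = inl (1, r (-4)) := by
  have hbc : planeHom (Ub * Uc⁻¹) = inl (1, r (-1)) :=
    calc planeHom (Ub * Uc⁻¹) = inl (1, sr 1) * (SwapWreath.swap * inl (sr 0, 1)) *
          SwapWreath.swap := by
          rw [map_mul, map_inv, planeHom_Ub, planeHom_Uc, mul_inv_rev, SwapWreath.swap_inv,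
            ← map_inv]
          simp only [mul_assoc, Prod.inv_mk, inv_sr, inv_one]
      _ = inl ((1, sr 1) * (1, sr 0)) := by
        rw [SwapWreath.swap_mul_inl, mul_assoc, mul_assoc, SwapWreath.swap_mul_self, mul_one,
          map_mul]
      _ = inl (1, r (-1)) := by simp
  rw [Uz, map_pow, hbc, ← map_pow]
  simp

theorem planeHom_Uw : planeHom Uw = inl (r 4, 1) := by
  have hcb : planeHom (Uc⁻¹ * Ub) = inl (r 1, 1) :=
    calc planeHom (Uc⁻¹ * Ub) = inl (sr 0, 1) * (SwapWreath.swap * inl (1, sr 1)) *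
          SwapWreath.swap := by
          rw [map_mul, map_inv, planeHom_Ub, planeHom_Uc, mul_inv_rev, SwapWreath.swap_inv,
            ← map_inv]
          simp only [mul_assoc, Prod.inv_mk, inv_sr, inv_one]
      _ = inl ((sr 0, 1) * (sr 1, 1)) := by
        rw [SwapWreath.swap_mul_inl, mul_assoc, mul_assoc, SwapWreath.swap_mul_self, mul_one,
          map_mul]
      _ = inl (r 1, 1) := by simp
  rw [Uw, map_pow, hcb, ← map_pow]
  simp

theorem ker_planeHom : planeHom.ker = isUTriple_generators.smallHom.range := by
  apply le_antisymm
  · let mk := QuotientGroup.mk' isUTriple_generators.smallHom.range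
    have ha : mk Ua ^ 2 = 1 := by
      rw [← map_pow, ← MonoidHom.mem_ker, QuotientGroup.ker_mk']
      exact isUTriple_generators.a_sq_mem_range
    have h : (((isUTriple_generators.map mk).planeLift ha).comp planeHom) = mk := by
      refine uHom_ext ?_ ?_ ?_ <;> rw [MonoidHom.comp_apply]
      · rw [planeHom_Ua, IsUTriple.planeLift_a]
      · rw [planeHom_Ub, IsUTriple.planeLift_b]
      · rw [planeHom_Uc, IsUTriple.planeLift_c]
    intro x hx
    rw [← QuotientGroup.ker_mk' isUTriple_generators.smallHom.range, MonoidHom.mem_ker,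
      ← DFunLike.congr_fun h x, MonoidHom.comp_apply, hx, map_one]
  · have ha : Ua ^ 2 ∈ planeHom.ker := by
      rw [MonoidHom.mem_ker, map_pow, planeHom_Ua, ← map_pow, sq]
      exact map_one inl
    have hn : planeHom.ker.Normal := inferInstance
    refine isUTriple_generators.range_smallHom_le ha ?_ (hn.conj_mem _ ha Ub)
    simpa using hn.conj_mem _ ha Ub⁻¹

instance isSolvable_uGroup : Group.IsSolvable UGroup :=
  Group.isSolvable_of_ker_le_range _ planeHom ker_planeHom.le

end Plane

section CosetAction

open DihedralGroup

/-- The points of a permutation representation of `U` of degree `32`. The point `(f, ε)` stands for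
the coset of `⟨b, c⟩` that contains `f * a ^ ε`, where `f` is identified with its image under
`IsUTriple.smallHom`. So an element `g` of `U` sends `(f, ε)` to the product of the conjugate of `f`
by `g` with the coset of `g * a ^ ε`. -/
abbrev CosetPoint : Type := (DihedralGroup 4 × Multiplicative (ZMod 2)) × Bool

/-- The action of `bc` on the cosets: it centralizes `a²` and `b⁻¹a²b`, conjugates the generator of
`C₂` to its product with `r 2`, fixes the coset of `1`, and sends the coset of `a` to that of
`a² * a`. -/
def cosetBC : CosetPoint → CosetPoint
  | ((d, k), ε) => ((d * r 2 ^ k.toAdd.val * sr 0 ^ ε.toNat, k), ε)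

/-- The action of `ab` on the cosets: it exchanges `a²` and `b⁻¹a²b`, centralizes `C₂`, and
exchanges the cosets of `1` and `a`. -/
def cosetAB : CosetPoint → CosetPoint
  | ((r i, k), ε) => ((r (-i), k), !ε)
  | ((sr i, k), ε) => ((sr (1 - i), k), !ε)

/-- The action of `abc` on the cosets: it centralizes `a²` and `C₂`, conjugates `b⁻¹a²b` to
`a² * (b * a² * b⁻¹) * a²`, and exchanges the cosets of `1` and `a`. -/
def cosetABC : CosetPoint → CosetPoint
  | ((r i, k), ε) => ((r (-i), k * .ofAdd i.cast), !ε)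
  | ((sr i, k), ε) => ((sr (-i), k * .ofAdd i.cast), !ε)

theorem cosetBC_involutive : cosetBC.Involutive := by
  unfold Function.Involutive
  decide +kernel

theorem cosetAB_involutive : cosetAB.Involutive := by
  unfold Function.Involutive
  decide +kernel

theorem cosetABC_involutive : cosetABC.Involutive := by
  unfold Function.Involutive
  decide +kernel

/-- The action of `a = abc * bc` on the cosets. -/
def cosetA : Equiv.Perm CosetPoint := cosetABC_involutive.toPerm * cosetBC_involutive.toPerm

/-- The action of `b = bc * abc * ab` on the cosets. -/
def cosetB : Equiv.Perm CosetPoint :=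
  cosetBC_involutive.toPerm * cosetABC_involutive.toPerm * cosetAB_involutive.toPerm

/-- The action of `c = ab * abc` on the cosets. -/
def cosetC : Equiv.Perm CosetPoint := cosetAB_involutive.toPerm * cosetABC_involutive.toPerm

theorem isUTriple_coset : IsUTriple cosetA cosetB cosetC := by
  constructor <;> decide +kernel

/-- The permutation representation of `U` on the cosets of `⟨b, c⟩`. -/
def cosetHom : UGroup →* Equiv.Perm CosetPoint := isUTriple_coset.hom

theorem cosetHom_Uz : cosetHom Uz = 1 := by
  simp only [Uz, cosetHom, map_pow, map_mul, map_inv, IsUTriple.hom_Ub, IsUTriple.hom_Uc]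
  decide +kernel

theorem cosetHom_Uw : cosetHom Uw = 1 := by
  simp only [Uw, cosetHom, map_pow, map_mul, map_inv, IsUTriple.hom_Ub, IsUTriple.hom_Uc]
  decide +kernel

/-- The action of `D₄ × C₂` on the cosets by left multiplication on the first coordinate. -/
def leftMulHom : DihedralGroup 4 × Multiplicative (ZMod 2) →* Equiv.Perm CosetPoint where
  toFun f := (Equiv.mulLeft f).prodCongr (Equiv.refl Bool)
  map_one' := by ext <;> simp
  map_mul' f g := by ext <;> simp [mul_assoc]

theorem leftMulHom_injective : Function.Injective leftMulHom := fun f g h ↦ by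
  simpa [leftMulHom] using congrArg Prod.fst (DFunLike.congr_fun h (1, false))

theorem cosetHom_comp_smallHom : cosetHom.comp isUTriple_generators.smallHom = leftMulHom := by
  have h : leftMulHom = isUTriple_coset.smallHom := by
    apply isUTriple_coset.eq_smallHom <;> decide +kernel
  rw [h]
  apply isUTriple_coset.eq_smallHom
  · rw [MonoidHom.comp_apply, IsUTriple.smallHom_sr_zero]
    simp [cosetHom]
  · rw [MonoidHom.comp_apply, IsUTriple.smallHom_sr_one]
    simp [cosetHom]
  · rw [MonoidHom.comp_apply, IsUTriple.smallHom_one_ofAdd_one]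
    simp [cosetHom]

theorem cosetHom_comp_smallHom_injective :
    Function.Injective (cosetHom.comp isUTriple_generators.smallHom) :=
  cosetHom_comp_smallHom ▸ leftMulHom_injective

end CosetAction

section Reduction

open DihedralGroup SemidirectProduct

/-- The homomorphism `planeHom` followed by the reduction of both dihedral groups modulo `4 * m`. -/
def planeModHom (m : ℕ) : UGroup →* SwapWreath (DihedralGroup (4 * m)) :=
  (SwapWreath.map (dihedralMap
    (ZMod.castHom (dvd_zero (4 * m)) (ZMod (4 * m))).toAddMonoidHom)).comp planeHom

theorem planeModHom_surjective (m : ℕ) : Function.Surjective (planeModHom m) :=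
  (SwapWreath.map_surjective (dihedralMap_surjective
    (ZMod.castHom_surjective (dvd_zero (4 * m))))).comp planeHom_surjective

theorem mem_ker_planeModHom_iff {m : ℕ} {u : UGroup} : u ∈ (planeModHom m).ker ↔
    ∃ i j : ℤ, planeHom u = inl (r (4 * m * i : ℤ).cast, r (4 * m * j : ℤ).cast) := by
  rw [MonoidHom.mem_ker, planeModHom, MonoidHom.comp_apply, SwapWreath.map_eq_one_iff]
  have hcast (k : ZMod 0) : (ZMod.castHom (dvd_zero (4 * m)) (ZMod (4 * m))).toAddMonoidHom k = 0 ↔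
      ∃ i : ℤ, k = (4 * m * i : ℤ).cast := by
    obtain ⟨k, rfl⟩ := ZMod.intCast_surjective k
    have hk := ZMod.intCast_zmod_eq_zero_iff_dvd k (4 * m)
    simpa [dvd_def, ← Int.cast_mul] using hk
  simp only [dihedralMap_eq_one_iff, hcast]
  constructor
  · rintro ⟨_, _, ⟨_, ⟨i, rfl⟩, rfl⟩, ⟨_, ⟨j, rfl⟩, rfl⟩, h⟩
    exact ⟨i, j, h⟩
  · rintro ⟨i, j, h⟩
    exact ⟨_, _, ⟨_, ⟨i, rfl⟩, rfl⟩, ⟨_, ⟨j, rfl⟩, rfl⟩, h⟩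

theorem planeHom_zpow_mul_zpow (m : ℕ) (i j : ℤ) :
    planeHom ((Uw ^ m) ^ i * (Uz ^ m) ^ (-j)) =
      inl (r (4 * m * i : ℤ).cast, r (4 * m * j : ℤ).cast) := by
  rw [map_mul, map_zpow, map_zpow, map_pow, map_pow, planeHom_Uz, planeHom_Uw, ← map_pow, ← map_pow,
    ← map_zpow, ← map_zpow, ← map_mul]
  simp

theorem mem_UK (m : ℕ) (i j : ℤ) : (Uw ^ m) ^ i * (Uz ^ m) ^ j ∈ UK m :=
  mul_mem (zpow_mem (Subgroup.subset_closure (by simp)) i)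
    (zpow_mem (Subgroup.subset_closure (by simp)) j)

theorem UK_le {m : ℕ} {H : Subgroup UGroup} (hz : Uz ^ m ∈ H) (hw : Uw ^ m ∈ H) : UK m ≤ H := by
  rw [UK, Subgroup.closure_le]
  rintro _ (rfl | rfl)
  exacts [hz, hw]

theorem UK_le_ker_planeModHom (m : ℕ) : UK m ≤ (planeModHom m).ker :=
  UK_le (mem_ker_planeModHom_iff.2 ⟨0, -1, by simpa using planeHom_zpow_mul_zpow m 0 (-1)⟩)
    (mem_ker_planeModHom_iff.2 ⟨1, 0, by simpa using planeHom_zpow_mul_zpow m 1 0⟩)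

theorem UK_le_ker_cosetHom (m : ℕ) : UK m ≤ cosetHom.ker :=
  UK_le (pow_mem cosetHom_Uz m) (pow_mem cosetHom_Uw m)

theorem ker_planeModHom (m : ℕ) : (planeModHom m).ker = UK m ⊔ planeHom.ker := by
  refine le_antisymm (fun u hu ↦ ?_) (sup_le (UK_le_ker_planeModHom m) fun u hu ↦ ?_)
  · obtain ⟨i, j, h⟩ := mem_ker_planeModHom_iff.1 hu
    rw [← planeHom_zpow_mul_zpow, MonoidHom.eq_iff] at h
    rw [← mul_inv_cancel_left ((Uw ^ m) ^ i * (Uz ^ m) ^ (-j)) u]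
    exact Subgroup.mul_mem_sup (mem_UK m i (-j)) h
  · rw [MonoidHom.mem_ker, planeModHom, MonoidHom.comp_apply, hu, map_one]

theorem ker_planeHom_inf_ker_cosetHom : planeHom.ker ⊓ cosetHom.ker = ⊥ := by
  rw [eq_bot_iff, ker_planeHom]
  rintro _ ⟨⟨f, rfl⟩, hf⟩
  rw [(injective_iff_map_eq_one _).1 cosetHom_comp_smallHom_injective f hf]
  exact one_mem ⊥

theorem UK_eq_ker_inf_ker (m : ℕ) : UK m = (planeModHom m).ker ⊓ cosetHom.ker := by
  refine le_antisymm (le_inf (UK_le_ker_planeModHom m) (UK_le_ker_cosetHom m)) ?_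
  rw [ker_planeModHom]
  rintro u ⟨hu, hu'⟩
  obtain ⟨k, hk, f, hf, rfl⟩ := Subgroup.mem_sup_of_normal_right.1 hu
  have hf' : f ∈ cosetHom.ker := (Subgroup.mul_mem_cancel_left _ (UK_le_ker_cosetHom m hk)).1 hu'
  have hf1 : f ∈ planeHom.ker ⊓ cosetHom.ker := ⟨hf, hf'⟩
  rw [ker_planeHom_inf_ker_cosetHom, Subgroup.mem_bot] at hf1
  rwa [hf1, mul_one]

theorem card_map_cosetHom (m : ℕ) : Nat.card ((planeModHom m).ker.map cosetHom) = 16 := by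
  rw [ker_planeModHom, Subgroup.map_sup, (Subgroup.map_eq_bot_iff _).2 (UK_le_ker_cosetHom m),
    bot_sup_eq, ker_planeHom, MonoidHom.map_range,
    ← Nat.card_congr (MonoidHom.ofInjective cosetHom_comp_smallHom_injective).toEquiv,
    Nat.card_prod, DihedralGroup.nat_card]
  simp

end Reduction

/-- For every positive integer `m`, the subgroup `K_m = ⟨z^m, w^m⟩` of `U` is a normal
subgroup of index `2048 m^2`, and the quotient `H_m = U / K_m` is solvable. -/
theorem Km_normal_index_solvable (m : ℕ) (hm : 0 < m) :
    ∃ hnorm : (UK m).Normal,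
      (UK m).index = 2048 * m ^ 2 ∧
      (letI := hnorm; IsSolvable (UGroup ⧸ UK m)) := by
  have hnorm : (UK m).Normal := by
    rw [UK_eq_ker_inf_ker]
    infer_instance
  refine ⟨hnorm, ?_, inferInstanceAs (Group.IsSolvable (UGroup ⧸ UK m))⟩
  rw [UK_eq_ker_inf_ker, index_ker_inf_ker (planeModHom_surjective m), card_map_cosetHom,
    SwapWreath.card, DihedralGroup.nat_card]
  ring
end

section
/- For every positive integer m, the images ā, b̄, c̄ of a, b, c in H_m = U/K_m satisfy the chiral intersection condition: ⟨ā⟩ ∩ ⟨b̄, c̄⟩ = {1} = ⟨ā, b̄⟩ ∩ ⟨c̄⟩ and ⟨ā, b̄⟩ ∩ ⟨b̄, c̄⟩ = ⟨b̄⟩; moreover, the subgroup ⟨ā, b̄⟩ of H_m has order 128. -/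
/-- The chiral form of the intersection condition for a triple `(t1, t2, t3)` of elements
of a group: `⟨t1⟩ ⊓ ⟨t2, t3⟩ = 1 = ⟨t1, t2⟩ ⊓ ⟨t3⟩` and `⟨t1, t2⟩ ⊓ ⟨t2, t3⟩ = ⟨t2⟩`. -/
def ChiralIC {G : Type*} [Group G] (t1 t2 t3 : G) : Prop :=
  Subgroup.closure {t1} ⊓ Subgroup.closure {t2, t3} = ⊥ ∧
  Subgroup.closure {t1, t2} ⊓ Subgroup.closure {t3} = ⊥ ∧
  Subgroup.closure {t1, t2} ⊓ Subgroup.closure {t2, t3} = Subgroup.closure {t2}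

/-!
The subgroup `⟨a, b⟩` acts as the rotation group of the toroidal map `{4,4}_{4,4}`, with `b` a
quarter turn about the vertex `0` and `a * b⁻¹` a unit translation. The relations reduce every
element of `⟨a, b⟩` to a translation times a power of `b`, so the stabilizer of `0` in `⟨a, b⟩` is
`⟨b⟩`, and orbit–stabilizer gives the order `32 * 4`. The action extends to `U` by letting `c` act
as a permutation fixing `0`, and `z` and `w` then act trivially, so it descends to `H_m`. Hence
`⟨b, c⟩` fixes `0` and meets `⟨a, b⟩` in `⟨b⟩`. Finally `a` moves `0` along a free orbit, which
settles `⟨a⟩ ∩ ⟨b, c⟩`, and `c` fixes `(1, 0)`, whose `b`-orbit is free, which settles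
`⟨a, b⟩ ∩ ⟨c⟩`.
-/

section GroupAction

variable {G Ω : Type*} [Group G] [MulAction G Ω]

theorem zpowers_inf_stabilizer_eq_bot {g : G} {p k : ℕ} [Fact p.Prime] {q : Ω}
    (hg : g ^ p ^ (k + 1) = 1) (hq : g ^ p ^ k • q ≠ q) :
    Subgroup.zpowers g ⊓ MulAction.stabilizer G q = ⊥ := by
  have hperiod : MulAction.period g q = p ^ (k + 1) :=
    Function.minimalPeriod_eq_prime_pow
      (fun h => hq <| by simpa [Function.IsPeriodicPt, Function.IsFixedPt, smul_iterate] using h)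
      (by simp [Function.IsPeriodicPt, Function.IsFixedPt, smul_iterate, hg])
  rw [eq_bot_iff]
  rintro _ ⟨⟨n, rfl⟩, (hn : g ^ n • q = q)⟩
  obtain ⟨l, rfl⟩ := hperiod ▸ MulAction.zpow_smul_eq_iff_period_dvd.1 hn
  simp only [zpow_mul, zpow_natCast, hg, one_zpow, Subgroup.mem_bot]

theorem card_eq_card_inf_stabilizer_mul_card (H : Subgroup G) [MulAction.IsPretransitive H Ω]
    (o : Ω) : Nat.card H = Nat.card ↥(H ⊓ MulAction.stabilizer G o) * Nat.card Ω := by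
  have hindex : (H ⊓ MulAction.stabilizer G o).relIndex H = Nat.card Ω := by
    rw [Subgroup.inf_relIndex_left]
    exact MulAction.index_stabilizer_of_transitive H o
  rw [← hindex, ← Subgroup.relIndex_bot_left (H ⊓ _),
    Subgroup.relIndex_mul_relIndex _ _ _ bot_le inf_le_left, Subgroup.relIndex_bot_left]

theorem ChiralIC.of_stabilizer {a b c : G} {o q : Ω}
    (hab : Subgroup.closure {a, b} ⊓ MulAction.stabilizer G o = Subgroup.zpowers b)
    (ha : Subgroup.zpowers a ⊓ MulAction.stabilizer G o = ⊥)
    (hb : Subgroup.zpowers b ⊓ MulAction.stabilizer G q = ⊥)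
    (hco : c • o = o) (hcq : c • q = q) : ChiralIC a b c := by
  have hbo : Subgroup.zpowers b ≤ MulAction.stabilizer G o := hab ▸ inf_le_right
  have hbco : Subgroup.closure {b, c} ≤ MulAction.stabilizer G o := by
    rw [Subgroup.closure_le, Set.pair_subset_iff]
    exact ⟨hbo (Subgroup.mem_zpowers b), hco⟩
  have hccl : Subgroup.zpowers c ≤ Subgroup.closure {b, c} := by
    simp [Subgroup.zpowers_le, Subgroup.mem_closure_of_mem]
  have hcq' : Subgroup.zpowers c ≤ MulAction.stabilizer G q := Subgroup.zpowers_le.2 hcq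
  have hinf : Subgroup.closure {a, b} ⊓ Subgroup.closure {b, c} ≤ Subgroup.zpowers b :=
    (inf_le_inf_left _ hbco).trans hab.le
  simp only [ChiralIC, ← Subgroup.zpowers_eq_closure]
  refine ⟨?_, ?_, hinf.antisymm ?_⟩
  · exact eq_bot_iff.2 ((inf_le_inf_left _ hbco).trans ha.le)
  · exact eq_bot_iff.2 ((le_inf ((inf_le_inf_left _ hccl).trans hinf)
      (inf_le_right.trans hcq')).trans hb.le)
  · simp [Subgroup.zpowers_le, Subgroup.mem_closure_of_mem]

theorem zpow_smul_eq_zsmul_add {A : Type*} [AddGroup A] [MulAction G A] {g : G} {v : A}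
    (hg : ∀ p : A, g • p = v + p) (n : ℤ) (p : A) : g ^ n • p = n • v + p := by
  have hinv (p : A) : g⁻¹ • p = -v + p := by rw [inv_smul_eq_iff, hg, add_neg_cancel_left]
  induction n with
  | zero => simp
  | succ n ih =>
    rw [add_comm, zpow_add, mul_smul, ih, zpow_one, hg, add_zsmul, one_zsmul, add_assoc]
  | pred n ih =>
    rw [sub_eq_neg_add, zpow_add, mul_smul, ih, zpow_neg_one, hinv, add_zsmul, neg_one_zsmul,
      add_assoc]

end GroupAction

section Translations

variable {G : Type*} [Group G] {x y b : G}

theorem exists_zpow_mul_zpow_mul_zpow_of_mem_closure (hx : SemiconjBy b x y)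
    (hy : SemiconjBy b y x⁻¹) (hxy : Commute x y) {g : G} (hg : g ∈ Subgroup.closure {x, b}) :
    ∃ i j k : ℤ, g = x ^ i * y ^ j * b ^ k := by
  induction hg using Subgroup.closure_induction_left with
  | one => exact ⟨0, 0, 0, by simp⟩
  | mul_left s hs g _ ih =>
    obtain ⟨i, j, k, rfl⟩ := ih
    obtain rfl | rfl := hs
    · exact ⟨1 + i, j, k, by simp only [zpow_add, zpow_one, mul_assoc]⟩
    · refine ⟨-j, i, 1 + k, ?_⟩
      have hmove : s * (x ^ i * y ^ j) = y ^ i * x⁻¹ ^ j * s :=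
        (hx.zpow_right i).mul_right (hy.zpow_right j)
      rw [← mul_assoc, hmove, inv_zpow', (hxy.symm.zpow_zpow i (-j)).eq, zpow_add, zpow_one]
      simp only [mul_assoc]
  | inv_mul_cancel s hs g _ ih =>
    obtain ⟨i, j, k, rfl⟩ := ih
    obtain rfl | rfl := hs
    · exact ⟨-1 + i, j, k, by simp only [zpow_add, zpow_neg_one, mul_assoc]⟩
    · refine ⟨j, -i, -1 + k, ?_⟩
      have hx' : SemiconjBy s⁻¹ x y⁻¹ := by simpa using hy.inv_symm_left.inv_right
      have hmove : s⁻¹ * (x ^ i * y ^ j) = y⁻¹ ^ i * x ^ j * s⁻¹ :=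
        (hx'.zpow_right i).mul_right (hx.inv_symm_left.zpow_right j)
      rw [← mul_assoc, hmove, inv_zpow', (hxy.symm.zpow_zpow (-i) j).eq, zpow_add, zpow_neg_one]
      simp only [mul_assoc]

theorem pow_eq_pow_of_mul_pow_eq_one (hx : SemiconjBy b x y) (hy : SemiconjBy b y x⁻¹)
    (hxy : Commute x y) {n : ℕ} (h : (x * y) ^ n = 1) : y ^ n = x ^ n := by
  have hconj : SemiconjBy b ((x * y) ^ n) ((y * x⁻¹) ^ n) := (hx.mul_right hy).pow_right n
  rw [h, hxy.symm.inv_right.mul_pow, inv_pow] at hconj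
  exact mul_inv_eq_one.1 (by simpa [SemiconjBy] using hconj)

theorem zpow_mul_zpow_eq_one_of_dvd (hx : SemiconjBy b x y) (hy : SemiconjBy b y x⁻¹)
    (hxy : Commute x y) {n : ℕ} (h : (x * y) ^ n = 1) {i j : ℤ} (hij : 2 * (n : ℤ) ∣ i + j)
    (hj : (n : ℤ) ∣ j) : x ^ i * y ^ j = 1 := by
  have hyx : y ^ n = x ^ n := pow_eq_pow_of_mul_pow_eq_one hx hy hxy h
  have hx2 : x ^ (2 * n) = 1 := by rw [two_mul, pow_add, ← h, hxy.mul_pow, hyx]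
  have hyj : y ^ j = x ^ j := by
    obtain ⟨l, rfl⟩ := hj
    simp only [zpow_mul, zpow_natCast, hyx]
  obtain ⟨l, hl⟩ := hij
  rw [hyj, ← zpow_add, hl, zpow_mul, show (2 * (n : ℤ)) = (2 * n : ℕ) by push_cast; rfl,
    zpow_natCast, hx2, one_zpow]

end Translations

/-- The defining relations of the rotation group of the toroidal map `{4,4}_{n,n}`, where `a` and
`b` are quarter turns about a face centre and an incident vertex, so that `a ^ 2 * b ^ 2` is the
unit diagonal translation. -/
structure IsRotaryPair {G : Type*} [Group G] (n : ℕ) (a b : G) : Prop where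
  pow_four_left : a ^ 4 = 1
  pow_four_right : b ^ 4 = 1
  mul_sq : (a * b) ^ 2 = 1
  sq_mul_sq_pow : (a ^ 2 * b ^ 2) ^ n = 1

namespace IsRotaryPair

variable {G : Type*} [Group G] {n : ℕ} {a b : G}

theorem map {H : Type*} [Group H] (h : IsRotaryPair n a b) (f : G →* H) :
    IsRotaryPair n (f a) (f b) where
  pow_four_left := by rw [← map_pow, h.pow_four_left, map_one]
  pow_four_right := by rw [← map_pow, h.pow_four_right, map_one]
  mul_sq := by rw [← map_mul, ← map_pow, h.mul_sq, map_one]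
  sq_mul_sq_pow := by simp only [← map_pow, ← map_mul, h.sq_mul_sq_pow, map_one]

theorem inv_sq_left (h : IsRotaryPair n a b) : a⁻¹ ^ 2 = a ^ 2 := by
  rw [inv_pow, inv_eq_iff_mul_eq_one, ← pow_add, h.pow_four_left]

theorem inv_sq_right (h : IsRotaryPair n a b) : b⁻¹ ^ 2 = b ^ 2 := by
  rw [inv_pow, inv_eq_iff_mul_eq_one, ← pow_add, h.pow_four_right]

theorem mul_eq_inv_mul_inv (h : IsRotaryPair n a b) : a * b = b⁻¹ * a⁻¹ := by
  rw [← mul_inv_rev, eq_inv_iff_mul_eq_one, ← sq, h.mul_sq]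

theorem mul_eq_inv_mul_inv' (h : IsRotaryPair n a b) : b * a = a⁻¹ * b⁻¹ := by
  calc b * a = b * (a * b) * b⁻¹ := by group
    _ = a⁻¹ * b⁻¹ := by rw [h.mul_eq_inv_mul_inv]; group

theorem semiconjBy_inv (h : IsRotaryPair n a b) :
    SemiconjBy b (b * (a * b⁻¹) * b⁻¹) (a * b⁻¹)⁻¹ := by
  calc b * (b * (a * b⁻¹) * b⁻¹) = b * b * a * b⁻¹ ^ 2 := by group
    _ = b * (b * (a * b)) * b := by rw [h.inv_sq_right]; simp only [sq, mul_assoc]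
    _ = (a * b⁻¹)⁻¹ * b := by rw [h.mul_eq_inv_mul_inv]; group

theorem translation_mul_conj (h : IsRotaryPair n a b) :
    a * b⁻¹ * (b * (a * b⁻¹) * b⁻¹) = a ^ 2 * b ^ 2 := by
  rw [← h.inv_sq_right, sq a]; group

theorem conj_translation_mul (h : IsRotaryPair n a b) :
    b * (a * b⁻¹) * b⁻¹ * (a * b⁻¹) = a ^ 2 * b ^ 2 := by
  calc b * (a * b⁻¹) * b⁻¹ * (a * b⁻¹) = b * a * b⁻¹ ^ 2 * a * b⁻¹ := by group
    _ = b * a * b * (b * a) * b⁻¹ := by rw [h.inv_sq_right]; simp only [sq, mul_assoc]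
    _ = a⁻¹ ^ 2 * b⁻¹ ^ 2 := by rw [h.mul_eq_inv_mul_inv', sq, sq]; group
    _ = a ^ 2 * b ^ 2 := by rw [h.inv_sq_left, h.inv_sq_right]

theorem commute_translation_conj (h : IsRotaryPair n a b) :
    Commute (a * b⁻¹) (b * (a * b⁻¹) * b⁻¹) :=
  h.translation_mul_conj.trans h.conj_translation_mul.symm

theorem exists_translation_mul_zpow (h : IsRotaryPair n a b) {g : G}
    (hg : g ∈ Subgroup.closure {a, b}) :
    ∃ i j k : ℤ, g = (a * b⁻¹) ^ i * (b * (a * b⁻¹) * b⁻¹) ^ j * b ^ k := by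
  have hle : Subgroup.closure {a, b} ≤ Subgroup.closure {a * b⁻¹, b} := by
    have hb : b ∈ Subgroup.closure {a * b⁻¹, b} := Subgroup.mem_closure_of_mem (by simp)
    rw [Subgroup.closure_le, Set.pair_subset_iff]
    refine ⟨?_, hb⟩
    simpa using mul_mem (Subgroup.mem_closure_of_mem (Set.mem_insert (a * b⁻¹) {b})) hb
  exact exists_zpow_mul_zpow_mul_zpow_of_mem_closure (SemiconjBy.conj_mk b _) h.semiconjBy_inv
    h.commute_translation_conj (hle hg)

theorem translation_eq_one_of_dvd (h : IsRotaryPair n a b) {i j : ℤ}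
    (hij : 2 * (n : ℤ) ∣ i + j) (hj : (n : ℤ) ∣ j) :
    (a * b⁻¹) ^ i * (b * (a * b⁻¹) * b⁻¹) ^ j = 1 :=
  zpow_mul_zpow_eq_one_of_dvd (SemiconjBy.conj_mk b _) h.semiconjBy_inv h.commute_translation_conj
    (h.translation_mul_conj ▸ h.sq_mul_sq_pow) hij hj

end IsRotaryPair

/-- The vertices of the toroidal map `{4,4}_{4,4}`, that is, of `ℤ² / ⟨(4, 4), (4, -4)⟩`: the class
of `(i, j)` is recorded as `(i + j, j)`, which identifies the quotient with `ZMod 8 × ZMod 4`. -/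
abbrev Torus : Type := ZMod 8 × ZMod 4

namespace Torus

/-- The quarter turn `(i, j) ↦ (-j, i)` about the vertex `0`, written in the coordinates
`(i + j, j)`. It is the action of `b`. -/
def quarterTurn : Torus ≃+ Torus where
  toFun p := (p.1 - 2 * p.2.cast, p.1.cast - p.2)
  invFun p := (2 * p.2.cast - p.1, p.2 - p.1.cast)
  left_inv := by decide
  right_inv := by decide
  map_add' := by decide

/-- The action of `c`. It is the only permutation of the torus which fixes `0` and satisfies the
relations of `U` together with the actions of `a` and `b`; the formula interpolates its values. -/
def twist : Equiv.Perm Torus where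
  toFun p := (p.1 - 2 * p.2.cast ^ 2, p.2 + p.1.cast ^ 2 - p.1.cast + 2 * p.1.cast * p.2)
  invFun p :=
    (p.1 + 2 * p.2.cast ^ 2, p.2 - p.1.cast ^ 2 + p.1.cast + 2 * p.2 ^ 2 - 2 * p.1.cast * p.2)
  left_inv := by decide
  right_inv := by decide

/-- The permutations of the torus by which `a`, `b` and `c` act. -/
def generator : Fin 3 → Equiv.Perm Torus :=
  ![Equiv.addLeft (1, 0) * quarterTurn.toEquiv, quarterTurn.toEquiv, twist]

theorem lift_generator_eq_one : ∀ r ∈ Urels, FreeGroup.lift generator r = 1 := by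
  simp only [Urels, Set.mem_insert_iff, Set.mem_singleton_iff, forall_eq_or_imp, forall_eq,
    map_mul, map_pow, map_inv, FreeGroup.lift_apply_of]
  decide

/-- The action of `U` on the torus. -/
def rep : UGroup →* Equiv.Perm Torus :=
  PresentedGroup.toGroup lift_generator_eq_one

theorem rep_Ua : rep Ua = Equiv.addLeft (1, 0) * quarterTurn.toEquiv :=
  PresentedGroup.toGroup.of lift_generator_eq_one

theorem rep_Ub : rep Ub = quarterTurn.toEquiv :=
  PresentedGroup.toGroup.of lift_generator_eq_one

theorem rep_Uc : rep Uc = twist :=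
  PresentedGroup.toGroup.of lift_generator_eq_one

theorem normalClosure_le_ker_rep : Subgroup.normalClosure {Uz, Uw} ≤ rep.ker := by
  refine Subgroup.normalClosure_le_normal (Set.pair_subset ?_ ?_)
  · simp only [SetLike.mem_coe, MonoidHom.mem_ker, Uz, map_mul, map_pow, map_inv, rep_Ub, rep_Uc]
    decide
  · simp only [SetLike.mem_coe, MonoidHom.mem_ker, Uw, map_mul, map_pow, map_inv, rep_Ub, rep_Uc]
    decide

section Action

variable {G : Type*} [Group G] [MulAction G Torus] {a b : G}

theorem zpow_mul_zpow_smul_zero (ha : ∀ p : Torus, a • p = (1, 0) + quarterTurn p)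
    (hb : ∀ p : Torus, b • p = quarterTurn p) (i j : ℤ) :
    ((a * b⁻¹) ^ i * (b * (a * b⁻¹) * b⁻¹) ^ j) • (0 : Torus) =
      (((i + j : ℤ) : ZMod 8), (j : ZMod 4)) := by
  have hx (p : Torus) : (a * b⁻¹) • p = (1, 0) + p := by
    rw [mul_smul, ha, ← hb, smul_inv_smul]
  have hy (p : Torus) : (b * (a * b⁻¹) * b⁻¹) • p = (1, 1) + p := by
    rw [mul_smul, mul_smul, hx, hb, map_add, ← hb (b⁻¹ • p), smul_inv_smul]
    congr 1
  rw [mul_smul, zpow_smul_eq_zsmul_add hy, zpow_smul_eq_zsmul_add hx]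
  simp

theorem isPretransitive_closure (ha : ∀ p : Torus, a • p = (1, 0) + quarterTurn p)
    (hb : ∀ p : Torus, b • p = quarterTurn p) :
    MulAction.IsPretransitive (Subgroup.closure {a, b}) Torus := by
  refine (MulAction.isPretransitive_iff_base 0).2 fun ⟨s, t⟩ => ?_
  have hac : a ∈ Subgroup.closure {a, b} := Subgroup.mem_closure_of_mem (by simp)
  have hbc : b ∈ Subgroup.closure {a, b} := Subgroup.mem_closure_of_mem (by simp)
  have hx : a * b⁻¹ ∈ Subgroup.closure {a, b} := mul_mem hac (inv_mem hbc)
  have hy : b * (a * b⁻¹) * b⁻¹ ∈ Subgroup.closure {a, b} := mul_mem (mul_mem hbc hx) (inv_mem hbc)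
  refine ⟨⟨_, mul_mem (zpow_mem hx (s.cast - t.cast)) (zpow_mem hy t.cast)⟩, ?_⟩
  simpa using zpow_mul_zpow_smul_zero ha hb (s.cast - t.cast) t.cast

theorem closure_inf_stabilizer_zero (h : IsRotaryPair 4 a b)
    (ha : ∀ p : Torus, a • p = (1, 0) + quarterTurn p)
    (hb : ∀ p : Torus, b • p = quarterTurn p) :
    Subgroup.closure {a, b} ⊓ MulAction.stabilizer G (0 : Torus) = Subgroup.zpowers b := by
  have hb0 : Subgroup.zpowers b ≤ MulAction.stabilizer G (0 : Torus) :=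
    Subgroup.zpowers_le.2 ((hb 0).trans (map_zero quarterTurn))
  refine le_antisymm ?_ (le_inf (Subgroup.zpowers_le.2 (Subgroup.mem_closure_of_mem (by simp))) hb0)
  rintro g ⟨hg, (hg0 : g • (0 : Torus) = 0)⟩
  obtain ⟨i, j, k, rfl⟩ := h.exists_translation_mul_zpow hg
  have hbk : b ^ k • (0 : Torus) = 0 := hb0 (Subgroup.zpow_mem_zpowers b k)
  rw [mul_smul, hbk, zpow_mul_zpow_smul_zero ha hb,
    Prod.mk_eq_zero, ZMod.intCast_zmod_eq_zero_iff_dvd, ZMod.intCast_zmod_eq_zero_iff_dvd] at hg0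
  rw [h.translation_eq_one_of_dvd hg0.1 hg0.2, one_mul]
  exact Subgroup.zpow_mem_zpowers b k

theorem sq_smul_ne (hb : ∀ p : Torus, b • p = quarterTurn p) :
    b ^ 2 • ((1, 0) : Torus) ≠ (1, 0) := by
  simp only [sq, mul_smul, hb]
  decide

theorem orderOf_eq_four (h : IsRotaryPair 4 a b) (hb : ∀ p : Torus, b • p = quarterTurn p) :
    orderOf b = 4 :=
  orderOf_eq_prime_pow (p := 2) (n := 1)
    (fun h2 => sq_smul_ne hb (by rw [← pow_one 2, h2, one_smul])) h.pow_four_right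

theorem card_closure (h : IsRotaryPair 4 a b)
    (ha : ∀ p : Torus, a • p = (1, 0) + quarterTurn p)
    (hb : ∀ p : Torus, b • p = quarterTurn p) :
    Nat.card (Subgroup.closure {a, b}) = 128 := by
  have := isPretransitive_closure ha hb
  rw [card_eq_card_inf_stabilizer_mul_card _ (0 : Torus), closure_inf_stabilizer_zero h ha hb,
    Nat.card_zpowers, orderOf_eq_four h hb]
  simp

theorem chiralIC (h : IsRotaryPair 4 a b) {c : G}
    (ha : ∀ p : Torus, a • p = (1, 0) + quarterTurn p)
    (hb : ∀ p : Torus, b • p = quarterTurn p) (hc : ∀ p : Torus, c • p = twist p) :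
    ChiralIC a b c := by
  have ha2 : a ^ 2 • (0 : Torus) ≠ 0 := by
    simp only [sq, mul_smul, ha]
    decide
  refine ChiralIC.of_stabilizer (closure_inf_stabilizer_zero h ha hb)
    (zpowers_inf_stabilizer_eq_bot (p := 2) (k := 1) h.pow_four_left ha2)
    (zpowers_inf_stabilizer_eq_bot (p := 2) (k := 1) h.pow_four_right (sq_smul_ne hb)) ?_ ?_
  all_goals
    rw [hc]
    decide

end Action

end Torus

theorem isRotaryPair_Ua_Ub : IsRotaryPair 4 Ua Ub where
  pow_four_left := PresentedGroup.one_of_mem (x := FreeGroup.of 0 ^ 4) (by simp [Urels])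
  pow_four_right := PresentedGroup.one_of_mem (x := FreeGroup.of 1 ^ 4) (by simp [Urels])
  mul_sq :=
    PresentedGroup.one_of_mem (x := (FreeGroup.of 0 * FreeGroup.of 1) ^ 2) (by simp [Urels])
  sq_mul_sq_pow :=
    PresentedGroup.one_of_mem (x := (FreeGroup.of 0 ^ 2 * FreeGroup.of 1 ^ 2) ^ 4) (by simp [Urels])

theorem UK_le_normalClosure (m : ℕ) : UK m ≤ Subgroup.normalClosure {Uz, Uw} := by
  rw [UK, Subgroup.closure_le]
  refine Set.pair_subset (pow_mem (Subgroup.subset_normalClosure ?_) m)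
    (pow_mem (Subgroup.subset_normalClosure ?_) m) <;> simp

theorem Hm_chiral_intersection_general (N : Subgroup UGroup) [N.Normal]
    (hN : N ≤ Subgroup.normalClosure {Uz, Uw}) :
    ChiralIC (Ua : UGroup ⧸ N) (Ub : UGroup ⧸ N) (Uc : UGroup ⧸ N) ∧
      Nat.card (Subgroup.closure {(Ua : UGroup ⧸ N), (Ub : UGroup ⧸ N)}) = 128 := by
  let ρ : UGroup ⧸ N →* Equiv.Perm Torus :=
    QuotientGroup.lift N Torus.rep (hN.trans Torus.normalClosure_le_ker_rep)
  let _ : MulAction (UGroup ⧸ N) Torus := MulAction.compHom Torus ρ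
  have ha : ∀ p : Torus, (Ua : UGroup ⧸ N) • p = (1, 0) + Torus.quarterTurn p :=
    Equiv.ext_iff.1 Torus.rep_Ua
  have hb : ∀ p : Torus, (Ub : UGroup ⧸ N) • p = Torus.quarterTurn p :=
    Equiv.ext_iff.1 Torus.rep_Ub
  have hc : ∀ p : Torus, (Uc : UGroup ⧸ N) • p = Torus.twist p := Equiv.ext_iff.1 Torus.rep_Uc
  have hrel : IsRotaryPair 4 (Ua : UGroup ⧸ N) (Ub : UGroup ⧸ N) :=
    isRotaryPair_Ua_Ub.map (QuotientGroup.mk' N)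
  exact ⟨Torus.chiralIC hrel ha hb hc, Torus.card_closure hrel ha hb⟩

/-- For every positive integer `m`, the images of `a, b, c` in `H_m = U / K_m` satisfy
the chiral form of the intersection condition; moreover the subgroup generated by the
images of `a` and `b` has order `128`. -/
theorem Hm_chiral_intersection (m : ℕ) (hm : 0 < m) (hnorm : (UK m).Normal) :
    haveI := hnorm
    ChiralIC (QuotientGroup.mk Ua : UGroup ⧸ UK m)
      (QuotientGroup.mk Ub : UGroup ⧸ UK m)
      (QuotientGroup.mk Uc : UGroup ⧸ UK m) ∧
    Nat.card (Subgroup.closure {(QuotientGroup.mk Ua : UGroup ⧸ UK m),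
      (QuotientGroup.mk Ub : UGroup ⧸ UK m)}) = 128 := by
  exact Hm_chiral_intersection_general (UK m) (UK_le_normalClosure m)
end
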